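/- arXiv:1403.3027 — 3 statements merged into one kernel-verified Lean document; each statement's English description precedes it below -/
import Mathlib

section
/- (Newton's theorem.) Let ρ ∈ L¹(ℝ³) be nonnegative and spherically symmetric (ρ(x) depends only on |x|). Then for every x ∈ ℝ³ with x ≠ 0: ∫_{ℝ³} ρ(y) |x−y|^{-1} dy = |x|^{-1} ∫_{|y| ≤ |x|} ρ(y) dy + ∫_{|y| > |x|} ρ(y) |y|^{-1} dy. In particular, ∫_{ℝ³} ρ(y)|x−y|^{-1} dy ≤ |x|^{-1} ‖ρ‖_{L¹(ℝ³)}. -/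
open MeasureTheory

noncomputable section

/-- Physical space `ℝ³`. -/
abbrev R3 := EuclideanSpace ℝ (Fin 3)

/-- A real function on `ℝ³` is spherically symmetric if it depends only on `|x|`. -/
def SphSym (ρ : R3 → ℝ) : Prop := ∀ x y : R3, ‖x‖ = ‖y‖ → ρ x = ρ y

open Set Real
open scoped ENNReal

/-- Weighted angular integral: the factor `ofReal (R * sin φ)` discards the lower half-circle. -/
lemma lintegral_ofReal_mul_sin_mul {R : ℝ} (hR : 0 < R) {k g : ℝ → ℝ} (hk : ∀ φ, 0 ≤ k φ)
    (hg : Continuous g) (hd : ∀ φ ∈ Ioo 0 π, HasDerivAt g (R * sin φ * k φ) φ) :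
    ∫⁻ φ in Ioo (-π) π, ENNReal.ofReal (R * sin φ) * ENNReal.ofReal (k φ) =
      ENNReal.ofReal (g π - g 0) := by
  have hnonneg : ∀ φ ∈ Ioo 0 π, 0 ≤ R * sin φ * k φ := fun φ hφ =>
    mul_nonneg (mul_nonneg hR.le (sin_pos_of_mem_Ioo hφ).le) (hk φ)
  have hint := intervalIntegral.integrableOn_deriv_of_nonneg hg.continuousOn hd hnonneg
  have hsub : ∫⁻ φ in Ioo (-π) π, ENNReal.ofReal (R * sin φ) * ENNReal.ofReal (k φ) =
      ∫⁻ φ in Ioo 0 π, ENNReal.ofReal (R * sin φ * k φ) := by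
    rw [← lintegral_indicator measurableSet_Ioo, ← lintegral_indicator measurableSet_Ioo]
    refine lintegral_congr fun φ => ?_
    by_cases h0 : φ ∈ Ioo 0 π
    · have h1 : φ ∈ Ioo (-π) π := ⟨by linarith [h0.1, pi_pos], h0.2⟩
      rw [indicator_of_mem h0, indicator_of_mem h1,
        ENNReal.ofReal_mul (mul_nonneg hR.le (sin_pos_of_mem_Ioo h0).le)]
    · rw [indicator_of_notMem h0, indicator_apply_eq_zero]
      intro h1
      have hφ : φ ≤ 0 := by
        by_contra! h
        exact h0 ⟨h, h1.2⟩
      rw [ENNReal.ofReal_of_nonpos, zero_mul]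
      exact mul_nonpos_of_nonneg_of_nonpos hR.le
        (sin_nonpos_of_nonpos_of_neg_pi_le hφ h1.1.le)
  rw [hsub, ← ofReal_integral_eq_lintegral_ofReal (hint.mono_set Ioo_subset_Ioc_self)
    ((ae_restrict_mem measurableSet_Ioo).mono hnonneg), ← integral_Ioc_eq_integral_Ioo,
    ← intervalIntegral.integral_of_le pi_pos.le,
    intervalIntegral.integral_eq_sub_of_hasDerivAt_of_le pi_pos.le hg.continuousOn hd
      ((intervalIntegrable_iff_integrableOn_Ioc_of_le pi_pos.le).2 hint)]

lemma lintegral_sin_mul_const {R : ℝ} (hR : 0 < R) {c : ℝ} (hc : 0 ≤ c) :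
    ∫⁻ φ in Ioo (-π) π, ENNReal.ofReal (R * sin φ) * ENNReal.ofReal c =
      ENNReal.ofReal (2 * R * c) := by
  rw [lintegral_ofReal_mul_sin_mul hR (k := fun _ => c) (g := fun φ => -(R * c * cos φ))
    (fun _ => hc) (by fun_prop)]
  · congr 1
    simp only [cos_pi, cos_zero]
    ring
  · intro φ _
    exact ((hasDerivAt_cos φ).const_mul (R * c)).neg.congr_deriv (by ring)

/-- The law-of-cosines form of the mean of `1 / |x - y|` over a sphere of radius `R`. -/
lemma lintegral_sin_mul_inv_sqrt {R a : ℝ} (hR : 0 < R) (ha : 0 < a) :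
    ∫⁻ φ in Ioo (-π) π, ENNReal.ofReal (R * sin φ) *
        ENNReal.ofReal (√(R ^ 2 + a ^ 2 - 2 * a * (R * cos φ)))⁻¹ =
      ENNReal.ofReal (2 * R * (max a R)⁻¹) := by
  rw [lintegral_ofReal_mul_sin_mul hR
    (g := fun φ => √(R ^ 2 + a ^ 2 - 2 * a * (R * cos φ)) / a)
    (fun _ => inv_nonneg.2 (sqrt_nonneg _)) (by fun_prop)]
  · congr 1
    have h1 : R ^ 2 + a ^ 2 - 2 * a * (R * cos π) = (a + R) ^ 2 := by rw [cos_pi]; ring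
    have h2 : R ^ 2 + a ^ 2 - 2 * a * (R * cos 0) = (a - R) ^ 2 := by rw [cos_zero]; ring
    simp only [h1, h2, sqrt_sq_eq_abs]
    rw [abs_of_pos (add_pos ha hR)]
    rcases le_total a R with h | h
    · rw [max_eq_right h, abs_of_nonpos (by linarith)]
      field_simp
      ring
    · rw [max_eq_left h, abs_of_nonneg (by linarith)]
      field_simp
      ring
  · intro φ hφ
    have hcos : cos φ < 1 := by
      rw [← cos_zero]
      exact cos_lt_cos_of_nonneg_of_le_pi le_rfl hφ.2.le hφ.1
    have hpos : 0 < R ^ 2 + a ^ 2 - 2 * a * (R * cos φ) := by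
      nlinarith [sq_nonneg (R - a), mul_pos (mul_pos ha hR) (sub_pos.2 hcos)]
    have hd : HasDerivAt (fun φ => R ^ 2 + a ^ 2 - 2 * a * (R * cos φ))
        (2 * a * (R * sin φ)) φ :=
      ((((hasDerivAt_cos φ).const_mul R).const_mul (2 * a)).const_sub
        (R ^ 2 + a ^ 2)).congr_deriv (by ring)
    refine ((hd.sqrt hpos.ne').div_const a).congr_deriv ?_
    have := (sqrt_pos.2 hpos).ne'
    field_simp

/-- Polar coordinates in the plane, as an iterated integral. -/
lemma lintegral_prod_polar {f : ℝ × ℝ → ℝ≥0∞} (hf : Measurable f) :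
    ∫⁻ p, f p = ∫⁻ r in Ioi 0, ∫⁻ φ in Ioo (-π) π,
      ENNReal.ofReal r * f (r * cos φ, r * sin φ) := by
  rw [← lintegral_comp_polarCoord_symm, polarCoord_target, Measure.volume_eq_prod,
    setLIntegral_prod]
  · rfl
  · simp only [polarCoord_symm_apply, smul_eq_mul]
    fun_prop

/-- Spherical coordinates for a function of the radius and the first coordinate. -/
lemma lintegral_norm_coord {H : ℝ → ℝ → ℝ≥0∞} (hH : Measurable (Function.uncurry H)) :
    ∫⁻ y : R3, H ‖y‖ (y 0) = ENNReal.ofReal (2 * π) * ∫⁻ r in Ioi 0, ∫⁻ φ in Ioo (-π) π,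
      ENNReal.ofReal r * (ENNReal.ofReal (r * sin φ) * H r (r * cos φ)) := by
  have hHc : ∀ {α : Type} [MeasurableSpace α] {u v : α → ℝ}, Measurable u → Measurable v →
      Measurable fun t => H (u t) (v t) := fun hu hv => hH.comp (hu.prodMk hv)
  have hcart : ∫⁻ y : R3, H ‖y‖ (y 0) =
      ∫⁻ z : ℝ, ∫⁻ p : ℝ × ℝ, H (√(z ^ 2 + (p.1 ^ 2 + p.2 ^ 2))) z := by
    rw [← (PiLp.volume_preserving_toLp (Fin 3)).lintegral_comp_emb
      (MeasurableEquiv.toLp 2 _).measurableEmbedding,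
      ← (volume_preserving_piFinSuccAbove (fun _ : Fin 3 => ℝ) 0).symm.lintegral_comp_emb
        (MeasurableEquiv.measurableEmbedding _), Measure.volume_eq_prod, lintegral_prod]
    · refine lintegral_congr fun z => ?_
      rw [← (volume_preserving_finTwoArrow ℝ).symm.lintegral_comp_emb
        (MeasurableEquiv.measurableEmbedding _)]
      refine lintegral_congr fun p => ?_
      simp [EuclideanSpace.norm_eq, Fin.sum_univ_three, add_assoc]
    · refine Measurable.aemeasurable (hHc ?_ ?_) <;> fun_prop
  have hcyl : ∀ z : ℝ, ∫⁻ p : ℝ × ℝ, H (√(z ^ 2 + (p.1 ^ 2 + p.2 ^ 2))) z =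
      ENNReal.ofReal (2 * π) * ∫⁻ s : ℝ, ENNReal.ofReal s * H (√(z ^ 2 + s ^ 2)) z := by
    intro z
    have hm : Measurable fun s : ℝ => ENNReal.ofReal s * H (√(z ^ 2 + s ^ 2)) z :=
      ENNReal.measurable_ofReal.mul (hHc (by fun_prop) measurable_const)
    rw [lintegral_prod_polar (hHc (by fun_prop) measurable_const)]
    have h1 : ∀ s φ : ℝ, (s * cos φ) ^ 2 + (s * sin φ) ^ 2 = s ^ 2 := fun s φ => by
      rw [← mul_one (s ^ 2), ← cos_sq_add_sin_sq φ]
      ring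
    simp only [h1, lintegral_const, Measure.restrict_apply_univ, volume_Ioo]
    rw [lintegral_mul_const _ hm, mul_comm, sub_neg_eq_add, ← two_mul]
    congr 1
    rw [← lintegral_indicator measurableSet_Ioi]
    refine lintegral_congr fun s => ?_
    by_cases hs : 0 < s
    · rw [indicator_of_mem (mem_Ioi.2 hs)]
    · rw [indicator_of_notMem (by simpa using hs), ENNReal.ofReal_of_nonpos (not_lt.1 hs),
        zero_mul]
  have hm : Measurable fun p : ℝ × ℝ => ENNReal.ofReal p.2 * H (√(p.1 ^ 2 + p.2 ^ 2)) p.1 :=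
    measurable_snd.ennreal_ofReal.mul (hHc (by fun_prop) measurable_fst)
  simp only [hcart, hcyl]
  rw [lintegral_const_mul _ (Measurable.lintegral_prod_right hm),
    ← lintegral_prod (μ := volume) (ν := volume) _ hm.aemeasurable, ← Measure.volume_eq_prod,
    lintegral_prod_polar hm]
  congr 1
  refine setLIntegral_congr_fun measurableSet_Ioi fun r hr => lintegral_congr fun φ => ?_
  have h1 : (r * cos φ) ^ 2 + (r * sin φ) ^ 2 = r ^ 2 := by
    rw [← mul_one (r ^ 2), ← cos_sq_add_sin_sq φ]
    ring
  simp only [h1, sqrt_sq (le_of_lt hr)]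

lemma exists_linearIsometryEquiv_map_eq_single (x : R3) :
    ∃ e : R3 ≃ₗᵢ[ℝ] R3, e x = EuclideanSpace.single 0 ‖x‖ :=
  ⟨_, Submodule.reflection_sub (w := EuclideanSpace.single 0 ‖x‖) (by simp)⟩

lemma norm_single_sub (a : ℝ) (y : R3) :
    ‖EuclideanSpace.single 0 a - y‖ = √(‖y‖ ^ 2 + a ^ 2 - 2 * a * y 0) := by
  rw [← sqrt_sq (norm_nonneg (_ - y)), norm_sub_sq_real]
  congr 1
  simp [EuclideanSpace.inner_single_left]
  ring

/-- Newton's theorem for measurable radial densities, in terms of lower integrals. -/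
lemma lintegral_radial_mul_inv_norm_sub {G : ℝ → ℝ≥0∞} (hG : Measurable G) {x : R3}
    (hx : x ≠ 0) :
    ∫⁻ y : R3, G ‖y‖ * ENNReal.ofReal ‖x - y‖⁻¹ =
      ∫⁻ y : R3, G ‖y‖ * ENNReal.ofReal (max ‖x‖ ‖y‖)⁻¹ := by
  obtain ⟨e, he⟩ := exists_linearIsometryEquiv_map_eq_single x
  have ha : 0 < ‖x‖ := norm_pos_iff.2 hx
  have hrot : ∫⁻ y : R3, G ‖y‖ * ENNReal.ofReal ‖x - y‖⁻¹ =
      ∫⁻ y : R3, G ‖y‖ * ENNReal.ofReal (√(‖y‖ ^ 2 + ‖x‖ ^ 2 - 2 * ‖x‖ * y 0))⁻¹ := by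
    rw [← e.measurePreserving.lintegral_comp_emb e.toHomeomorph.measurableEmbedding (fun y =>
      G ‖y‖ * ENNReal.ofReal (√(‖y‖ ^ 2 + ‖x‖ ^ 2 - 2 * ‖x‖ * y 0))⁻¹)]
    refine lintegral_congr fun y => ?_
    rw [← norm_single_sub, ← he, ← map_sub, e.norm_map, e.norm_map]
  rw [hrot, lintegral_norm_coord
      (H := fun r z => G r * ENNReal.ofReal (√(r ^ 2 + ‖x‖ ^ 2 - 2 * ‖x‖ * z))⁻¹)
      (by unfold Function.uncurry; fun_prop),
    lintegral_norm_coord (H := fun r _ => G r * ENNReal.ofReal (max ‖x‖ r)⁻¹)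
      (by unfold Function.uncurry; fun_prop)]
  congr 1
  refine setLIntegral_congr_fun measurableSet_Ioi fun r hr => ?_
  have hr : 0 < r := hr
  simp only [mul_left_comm _ (G r)]
  rw [lintegral_const_mul _ (by fun_prop), lintegral_const_mul _ (by fun_prop),
    lintegral_const_mul _ (by fun_prop), lintegral_const_mul _ (by fun_prop),
    lintegral_sin_mul_inv_sqrt hr ha,
    lintegral_sin_mul_const hr (inv_nonneg.2 (le_max_of_le_left ha.le))]

/-- A null set of radii pulls back to a null set of points. -/
lemma ae_norm_of_ae_restrict_Ioi {p : ℝ → Prop} (hp : ∀ᵐ r ∂volume.restrict (Ioi 0), p r) :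
    ∀ᵐ y : R3, p ‖y‖ := by
  obtain ⟨N, hpN, hN, hN0⟩ := exists_measurable_superset_of_null hp
  have hzero : (fun r : ℝ => r ^ (Module.finrank ℝ R3 - 1) • N.indicator (1 : ℝ → ℝ) r)
      =ᵐ[volume.restrict (Ioi 0)] 0 := by
    filter_upwards [measure_eq_zero_iff_ae_notMem.1 hN0] with r hr
    simp [hr]
  have hint : Integrable (fun y : R3 => N.indicator (1 : ℝ → ℝ) ‖y‖) :=
    (integrable_fun_norm_addHaar volume).2 ((integrable_zero _ _ _).congr hzero.symm)
  have hval : ∫ y : R3, N.indicator (1 : ℝ → ℝ) ‖y‖ = 0 := by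
    rw [integral_fun_norm_addHaar volume (N.indicator (1 : ℝ → ℝ)), integral_congr_ae hzero]
    simp
  have hnn : 0 ≤ fun y : R3 => N.indicator (1 : ℝ → ℝ) ‖y‖ := fun y =>
    indicator_nonneg (fun _ _ => zero_le_one) _
  filter_upwards [(integral_eq_zero_iff_of_nonneg hnn hint).1 hval] with y hy
  by_contra hpy
  have : ‖y‖ ∈ N := hpN hpy
  simp [this] at hy

/-- An integrable spherically symmetric function has a measurable radial profile. -/
lemma SphSym.exists_measurable_profile {ρ : R3 → ℝ} (hsph : SphSym ρ) (hint : Integrable ρ) :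
    ∃ g : ℝ → ℝ, Measurable g ∧ ∀ᵐ y : R3, ρ y = g ‖y‖ := by
  set f : ℝ → ℝ := fun r => ρ (EuclideanSpace.single 0 r)
  have hρ : ρ = fun y => f ‖y‖ := funext fun y => hsph _ _ (by simp)
  rw [hρ, integrable_fun_norm_addHaar volume] at hint
  have hf : AEMeasurable f (volume.restrict (Ioi 0)) := by
    refine AEMeasurable.congr (((measurable_id.pow_const
      (Module.finrank ℝ R3 - 1)).inv.aemeasurable).mul hint.aemeasurable) ?_
    filter_upwards [ae_restrict_mem measurableSet_Ioi] with r hr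
    have : r ^ (Module.finrank ℝ R3 - 1) ≠ 0 := pow_ne_zero _ (ne_of_gt hr)
    simp only [Pi.mul_apply, Pi.inv_apply, id, smul_eq_mul]
    exact inv_mul_cancel_left₀ this _
  refine ⟨hf.mk f, hf.measurable_mk, ?_⟩
  filter_upwards [ae_norm_of_ae_restrict_Ioi hf.ae_eq_mk] with y hy
  rw [hρ]
  exact hy

lemma SphSym.integral_div_norm_sub {ρ : R3 → ℝ} (hsph : SphSym ρ) (hint : Integrable ρ)
    (hpos : ∀ x, 0 ≤ ρ x) {x : R3} (hx : x ≠ 0) :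
    ∫ y : R3, ρ y / ‖x - y‖ = ∫ y : R3, ρ y / max ‖x‖ ‖y‖ := by
  obtain ⟨g, hg, hρg⟩ := hsph.exists_measurable_profile hint
  have hm : AEStronglyMeasurable ρ := hint.aestronglyMeasurable
  have hprofile : ∀ k : R3 → ℝ, ∫⁻ y, ENNReal.ofReal (ρ y / k y) =
      ∫⁻ y, ENNReal.ofReal (g ‖y‖) * ENNReal.ofReal (k y)⁻¹ := fun k => by
    refine lintegral_congr_ae (hρg.mono fun y hy => ?_)
    simp only
    rw [div_eq_mul_inv, ENNReal.ofReal_mul (hpos y), hy]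
  rw [integral_eq_lintegral_of_nonneg_ae, integral_eq_lintegral_of_nonneg_ae, hprofile, hprofile,
    lintegral_radial_mul_inv_norm_sub hg.ennreal_ofReal hx]
  · exact .of_forall fun y => div_nonneg (hpos y) (le_max_of_le_left (norm_nonneg x))
  · exact (hm.aemeasurable.div (by fun_prop)).aestronglyMeasurable
  · exact .of_forall fun y => div_nonneg (hpos y) (norm_nonneg _)
  · exact (hm.aemeasurable.div (by fun_prop)).aestronglyMeasurable

/-- **Newton's theorem**: for nonnegative, integrable, spherically symmetric `ρ` and
`x ≠ 0`, `∫ ρ(y)|x−y|⁻¹ dy = |x|⁻¹ ∫_{|y|≤|x|} ρ(y) dy + ∫_{|y|>|x|} ρ(y)|y|⁻¹ dy`;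
in particular `∫ ρ(y)|x−y|⁻¹ dy ≤ |x|⁻¹ ‖ρ‖_{L¹}`. -/
theorem newtons_theorem (ρ : R3 → ℝ) (hint : Integrable ρ) (hpos : ∀ x, 0 ≤ ρ x)
    (hsph : SphSym ρ) :
    ∀ x : R3, x ≠ 0 →
      (∫ y : R3, ρ y / ‖x - y‖) =
          ‖x‖⁻¹ * (∫ y in {y : R3 | ‖y‖ ≤ ‖x‖}, ρ y) +
            ∫ y in {y : R3 | ‖x‖ < ‖y‖}, ρ y / ‖y‖ ∧
      (∫ y : R3, ρ y / ‖x - y‖) ≤ ‖x‖⁻¹ * ∫ y : R3, ρ y := by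
  intro x hx
  have ha : 0 < ‖x‖ := norm_pos_iff.2 hx
  have hle : ∀ y, ρ y / max ‖x‖ ‖y‖ ≤ ‖x‖⁻¹ * ρ y := fun y => by
    rw [mul_comm, ← div_eq_mul_inv]
    exact div_le_div_of_nonneg_left (hpos y) ha (le_max_left _ _)
  have hnn : ∀ y, 0 ≤ ρ y / max ‖x‖ ‖y‖ := fun y =>
    div_nonneg (hpos y) (le_max_of_le_left ha.le)
  have hi : Integrable fun y => ρ y / max ‖x‖ ‖y‖ :=
    (hint.const_mul ‖x‖⁻¹).mono'
      (hint.aestronglyMeasurable.aemeasurable.div (by fun_prop)).aestronglyMeasurable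
      (.of_forall fun y => (norm_of_nonneg (hnn y)).trans_le (hle y))
  have hs : MeasurableSet {y : R3 | ‖y‖ ≤ ‖x‖} := measurableSet_le (by fun_prop) (by fun_prop)
  have hcompl : {y : R3 | ‖y‖ ≤ ‖x‖}ᶜ = {y : R3 | ‖x‖ < ‖y‖} := by
    ext y
    simp
  rw [hsph.integral_div_norm_sub hint hpos hx]
  constructor
  · rw [← integral_add_compl hs hi, hcompl, ← integral_const_mul]
    congr 1
    · refine setIntegral_congr_fun hs fun y hy => ?_
      simp only [max_eq_left (show ‖y‖ ≤ ‖x‖ from hy)]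
      rw [mul_comm, div_eq_mul_inv]
    · refine setIntegral_congr_fun (hcompl ▸ hs.compl) fun y hy => ?_
      simp only [max_eq_right (le_of_lt (show ‖x‖ < ‖y‖ from hy))]
  · rw [← integral_const_mul]
    exact integral_mono hi (hint.const_mul _) hle
end
end

section
/- (Virial identity for the Coulomb potential.) Let ρ : ℝ³ → ℝ be smooth and compactly supported, and define V(x) = −∫_{ℝ³} ρ(y) |x−y|^{-1} dy. Then ∫_{ℝ³} ρ(x) (x · ∇V(x)) dx = −(1/2) ∫_{ℝ³} ρ(x) V(x) dx. -/
open MeasureTheory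

noncomputable section

/-- The (attractive) Coulomb potential of a density `ρ`:
`V(x) = −∫ ρ(y)|x−y|⁻¹ dy`. -/
def coulPot (ρ : R3 → ℝ) (x : R3) : ℝ := -∫ y : R3, ρ y / ‖x - y‖

open Set Filter Topology Convolution

/-- The Coulomb kernel is locally integrable on `ℝ³`. -/
lemma locallyIntegrable_inv_norm : LocallyIntegrable (fun z : R3 => ‖z‖⁻¹) := by
  refine locallyIntegrable_of_norm_le_rpow (C := 1) (α := 1) (by simp) (by simp)
    (ae_of_all _ fun z => ?_) measurable_norm.inv.aestronglyMeasurable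
  simp [Real.rpow_neg_one]

lemma coulPot_eq_convolution (ρ : R3 → ℝ) :
    coulPot ρ = fun x => -(ρ ⋆[ContinuousLinearMap.mul ℝ ℝ] fun z : R3 => ‖z‖⁻¹) x := by
  ext x
  simp [coulPot, convolution_def, div_eq_mul_inv]

lemma continuous_coulPot {ρ : R3 → ℝ} (hρ : Continuous ρ) (hsupp : HasCompactSupport ρ) :
    Continuous (coulPot ρ) := by
  rw [coulPot_eq_convolution]
  exact (hsupp.continuous_convolution_left _ hρ locallyIntegrable_inv_norm).neg

lemma contDiff_coulPot {ρ : R3 → ℝ} (hρ : ContDiff ℝ 1 ρ) (hsupp : HasCompactSupport ρ) :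
    ContDiff ℝ 1 (coulPot ρ) := by
  rw [coulPot_eq_convolution]
  exact (hsupp.contDiff_convolution_left _ hρ locallyIntegrable_inv_norm).neg

lemma integrable_div_norm_sub {ρ : R3 → ℝ} (hρ : Continuous ρ) (hsupp : HasCompactSupport ρ)
    (x : R3) : Integrable fun y => ρ y / ‖x - y‖ := by
  have h := hsupp.convolutionExists_left (ContinuousLinearMap.mul ℝ ℝ) hρ
    locallyIntegrable_inv_norm x
  simpa [ConvolutionExistsAt, div_eq_mul_inv] using h

lemma integrable_dilated_interaction {ρ : R3 → ℝ} (hρ : Continuous ρ)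
    (hsupp : HasCompactSupport ρ) (t : ℝ) :
    Integrable (fun p : R3 × R3 => ρ p.1 * (ρ p.2 / ‖t • p.1 - p.2‖))
      (volume.prod volume) := by
  have hmeas : Measurable fun p : R3 × R3 => ρ p.1 * (ρ p.2 / ‖t • p.1 - p.2‖) := by
    have := hρ.measurable
    fun_prop
  rw [integrable_prod_iff hmeas.aestronglyMeasurable]
  refine ⟨ae_of_all _ fun x => (integrable_div_norm_sub hρ hsupp (t • x)).const_mul (ρ x), ?_⟩
  have hcont := continuous_coulPot hρ.abs hsupp.norm
  have h : Integrable fun x => |ρ x| * -coulPot (fun y => |ρ y|) (t • x) := by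
    refine Continuous.integrable_of_hasCompactSupport ?_ (HasCompactSupport.mul_right hsupp.norm)
    exact hρ.abs.mul (hcont.comp (continuous_const_smul t)).neg
  refine h.congr (ae_of_all _ fun x => ?_)
  simp [coulPot, integral_const_mul]

/-- Exchanging the two charges in the interaction energy of `ρ` with a dilate of itself. -/
lemma integral_mul_coulPot_smul {ρ : R3 → ℝ} (hρ : Continuous ρ) (hsupp : HasCompactSupport ρ)
    {t : ℝ} (ht : 0 < t) :
    ∫ x, ρ x * coulPot ρ (t • x) = t⁻¹ * ∫ x, ρ x * coulPot ρ (t⁻¹ • x) := by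
  have hswap := integral_integral_swap (f := fun x y => ρ x * (ρ y / ‖t • x - y‖))
    (integrable_dilated_interaction hρ hsupp t)
  have hker (x y : R3) : ‖t • x - y‖ = t * ‖t⁻¹ • y - x‖ := by
    rw [norm_sub_rev (t⁻¹ • y), ← abs_of_pos ht, ← Real.norm_eq_abs, ← norm_smul, smul_sub,
      Real.norm_eq_abs, abs_of_pos ht, smul_inv_smul₀ ht.ne']
  have hterm (x y : R3) :
      ρ x * (ρ y / ‖t • x - y‖) = t⁻¹ * (ρ y * (ρ x / ‖t⁻¹ • y - x‖)) := by
    rw [hker]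
    simp only [div_eq_mul_inv, mul_inv]
    ring
  simp only [coulPot, mul_neg, integral_neg, ← integral_const_mul]
  rw [hswap]
  simp only [hterm, integral_const_mul]

/-- Differentiation under the integral sign of the dilations of a `C¹` function, tested against a
compactly supported continuous function. -/
lemma hasDerivAt_integral_mul_comp_smul {ρ V : R3 → ℝ} (hρ : Continuous ρ)
    (hsupp : HasCompactSupport ρ) (hV : ContDiff ℝ 1 V) :
    HasDerivAt (fun t : ℝ => ∫ x, ρ x * V (t • x)) (∫ x, ρ x * fderiv ℝ V x x) 1 := by
  have hdV : Continuous (fderiv ℝ V) := hV.continuous_fderiv one_ne_zero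
  have hcont : Continuous fun p : ℝ × R3 => ρ p.2 * fderiv ℝ V (p.1 • p.2) p.2 := by fun_prop
  obtain ⟨C, hC⟩ := (isCompact_Icc.prod hsupp).exists_bound_of_continuousOn
    (s := Icc (0 : ℝ) 2 ×ˢ tsupport ρ) hcont.continuousOn
  have hint (t : ℝ) : Integrable fun x => ρ x * V (t • x) :=
    (hρ.mul (hV.continuous.comp (continuous_const_smul t))).integrable_of_hasCompactSupport
      hsupp.mul_right
  have key := hasDerivAt_integral_of_dominated_loc_of_deriv_le (μ := volume)
    (F := fun (t : ℝ) x => ρ x * V (t • x)) (F' := fun t x => ρ x * fderiv ℝ V (t • x) x)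
    (x₀ := 1) (s := Icc 0 2) (bound := (tsupport ρ).indicator fun _ => C)
    (Icc_mem_nhds one_pos one_lt_two) (Eventually.of_forall fun t => (hint t).aestronglyMeasurable)
    (hint 1) (hcont.comp (by fun_prop : Continuous fun x : R3 => ((1 : ℝ), x))).aestronglyMeasurable
    (ae_of_all _ fun x t ht => ?_) ?_ (ae_of_all _ fun x t _ => ?_)
  · simpa using key.2
  · by_cases hx : x ∈ tsupport ρ
    · simpa [hx] using hC (t, x) ⟨ht, hx⟩
    · simp [hx, image_eq_zero_of_notMem_tsupport hx]
  · rw [integrable_indicator_iff (isClosed_tsupport ρ).measurableSet]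
    exact integrableOn_const hsupp.measure_ne_top
  · have h := (hV.differentiable one_ne_zero (t • x)).hasFDerivAt.comp_hasDerivAt t
      ((hasDerivAt_id t).smul_const x)
    simpa using h.const_mul (ρ x)

/-- **Virial identity for the Coulomb potential** (eq. (4.2)): for smooth compactly
supported `ρ` and `V = −|·|⁻¹ ⋆ ρ`,
`∫ ρ(x) (x·∇V(x)) dx = −½ ∫ ρ(x) V(x) dx`, where `x·∇V(x)` is the Fréchet derivative of
`V` at `x` applied to the vector `x`. -/
theorem coulomb_virial_identity (ρ : R3 → ℝ) (hsmooth : ContDiff ℝ (⊤ : ℕ∞) ρ)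
    (hsupp : HasCompactSupport ρ) :
    (∫ x : R3, ρ x * fderiv ℝ (coulPot ρ) x x) =
      -(1 / 2) * ∫ x : R3, ρ x * coulPot ρ x := by
  have hρ := hsmooth.continuous
  have hV : ContDiff ℝ 1 (coulPot ρ) :=
    contDiff_coulPot (hsmooth.of_le (by exact_mod_cast le_top)) hsupp
  have hE := hasDerivAt_integral_mul_comp_smul hρ hsupp hV
  have hinv : HasDerivAt (fun t : ℝ => t⁻¹) (-1) 1 := by
    simpa using hasDerivAt_inv (one_ne_zero : (1 : ℝ) ≠ 0)
  have hE_inv := HasDerivAt.comp (h₂ := fun t : ℝ => ∫ x, ρ x * coulPot ρ (t • x)) (1 : ℝ)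
    (by simpa using hE) hinv
  have heq : (fun t : ℝ => ∫ x, ρ x * coulPot ρ (t • x)) =ᶠ[𝓝 1]
      fun t => t⁻¹ * ∫ x, ρ x * coulPot ρ (t⁻¹ • x) := by
    filter_upwards [lt_mem_nhds one_pos] with t ht
    exact integral_mul_coulPot_smul hρ hsupp ht
  have huniq := hE.unique ((hinv.mul hE_inv).congr_of_eventuallyEq heq)
  simp only [Function.comp_apply, inv_one, one_smul] at huniq
  linarith
end
end

section
/- (Strichartz-type estimate for the fractional heat semigroup.) Let n ≥ 1, α > 0, ν ≥ 0, b > 0, T > 0 and I = [0,T). Let (q,p,r) be an admissible triplet: 1/q = (n/(2α))(1/r − 1/p), with 1 < r ≤ p, and p < nr/(n−2α) if n > 2α while p < ∞ if n ≤ 2α. Set r₀ = nb/(2α), and assume p > b+1, p < r(b+1), r ≥ r₀ > 1, q > b+1 and ν/(2α) + nb/(2rα) < 1. Then there is a constant C such that for every f ∈ L^{q/(b+1)}(I; L^{p/(b+1)}(ℝⁿ)): ‖ ∫₀ᵗ (−Δ)^{ν/2} S_α(t−s) f(s,·) ds ‖_{L^∞(I; L^r(ℝⁿ))} ≤ C T^{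 1 − nb/(2rα) − ν/(2α) } ‖f‖_{L^{q/(b+1)}(I; L^{p/(b+1)}(ℝⁿ))}. -/
open MeasureTheory Complex
open scoped FourierTransform ENNReal

noncomputable section

/-- Euclidean space `ℝⁿ`. -/
abbrev Rn (n : ℕ) := EuclideanSpace ℝ (Fin n)

/-- The kernel `K_t^ν = 𝓕⁻¹(|ξ|^ν e^{−t|ξ|^{2α}})` of `(−Δ)^{ν/2} S_α(t)`, where
`S_α(t) = e^{−t(−Δ)^α}` is the fractional heat semigroup. -/
def heatKernel (n : ℕ) (α ν t : ℝ) : Rn n → ℂ :=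
  𝓕⁻ fun ξ : Rn n => ((‖ξ‖ ^ ν * Real.exp (-(t * ‖ξ‖ ^ (2 * α))) : ℝ) : ℂ)

/-- The mixed space-time norm `‖f‖_{L^γ([0,T); L^β(ℝⁿ))}`. -/
def mixedNorm (n : ℕ) (T γ β : ℝ) (f : ℝ → Rn n → ℂ) : ℝ≥0∞ :=
  (∫⁻ s in Set.Ico (0 : ℝ) T, (eLpNorm (f s) (ENNReal.ofReal β) volume) ^ γ) ^ (1 / γ)

/-- **Young's convolution inequality** for `ℝ≥0∞`-valued functions. -/
theorem lintegral_convolution_rpow_le {G : Type*} [AddCommGroup G] [MeasurableSpace G]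
    [MeasurableAdd₂ G] [MeasurableNeg G] (μ : Measure G) [SFinite μ] [μ.IsAddLeftInvariant]
    [μ.IsNegInvariant] {k g : G → ℝ≥0∞} (hk : Measurable k) (hg : Measurable g) {m c r : ℝ}
    (hm : 1 < m) (hc : 1 < c) (hr : 1 < r) (hrel : 1 / m + 1 / c = 1 + 1 / r) :
    ∫⁻ x, (∫⁻ y, k (x - y) * g y ∂μ) ^ r ∂μ ≤
      ((∫⁻ x, k x ^ m ∂μ) ^ (1 / m) * (∫⁻ y, g y ^ c ∂μ) ^ (1 / c)) ^ r := by
  have hm0 : 0 < m := by linarith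
  have hc0 : 0 < c := by linarith
  have hr0 : 0 < r := by linarith
  have hm1 : 1 / m < 1 := by rw [div_lt_one hm0]; exact hm
  have hc1 : 1 / c < 1 := by rw [div_lt_one hc0]; exact hc
  have hri : 0 < 1 / r := by positivity
  have hmr : 0 ≤ 1 / m - 1 / r := by linarith
  have hcr : 0 ≤ 1 / c - 1 / r := by linarith
  set A := ∫⁻ x, k x ^ m ∂μ with hA
  set B := ∫⁻ y, g y ^ c ∂μ with hB
  have hmul (a : ℝ≥0∞) {p : ℝ} (hp : 0 < p) (hpr : 0 ≤ 1 / p - 1 / r) :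
      a ^ (1 / r) * a ^ (1 / p - 1 / r) = a ^ (1 / p) := by
    rw [← ENNReal.rpow_add_of_nonneg _ _ hri.le hpr]; congr 1; ring
  have hroot (a : ℝ≥0∞) {p : ℝ} (hp : 0 < p) : (a ^ p) ^ (1 / p) = a := by
    rw [← ENNReal.rpow_mul, mul_one_div_cancel hp.ne', ENNReal.rpow_one]
  have hkx (x : G) : Measurable fun y => k (x - y) := by fun_prop
  have hshift (x : G) : ∫⁻ y, k (x - y) ^ m ∂μ = A :=
    lintegral_sub_left_eq_self (fun z => k z ^ m) x
  have hpt (x : G) : ∫⁻ y, k (x - y) * g y ∂μ ≤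
      (∫⁻ y, k (x - y) ^ m * g y ^ c ∂μ) ^ (1 / r) * (A ^ (1 / m - 1 / r) * B ^ (1 / c - 1 / r)) := by
    have := ENNReal.lintegral_prod_norm_pow_le (μ := μ) (Finset.univ : Finset (Fin 3))
      (f := ![fun y => k (x - y) ^ m * g y ^ c, fun y => k (x - y) ^ m, fun y => g y ^ c])
      (p := ![1 / r, 1 / m - 1 / r, 1 / c - 1 / r])
      (by
        intro i _
        fin_cases i
        · exact (((hkx x).pow_const m).mul (hg.pow_const c)).aemeasurable
        · exact ((hkx x).pow_const m).aemeasurable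
        · exact (hg.pow_const c).aemeasurable)
      (by simp [Fin.sum_univ_three] at hrel ⊢; linarith)
      (by
        intro i _
        fin_cases i
        · exact hri.le
        · exact hmr
        · exact hcr)
    simp only [Fin.prod_univ_three, Matrix.cons_val_zero, Matrix.cons_val_one, Matrix.cons_val] at this
    rw [hshift x, mul_assoc] at this
    refine le_trans (lintegral_mono fun y => le_of_eq ?_) this
    rw [ENNReal.mul_rpow_of_nonneg _ _ hri.le]
    calc k (x - y) * g y = ((k (x - y) ^ m) ^ (1 / m)) * ((g y ^ c) ^ (1 / c)) := by
          rw [hroot _ hm0, hroot _ hc0]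
      _ = _ := by rw [← hmul _ hm0 hmr, ← hmul _ hc0 hcr]; ring
  have hrr (a : ℝ≥0∞) : (a ^ (1 / r)) ^ r = a := by
    rw [← ENNReal.rpow_mul, one_div_mul_cancel hr0.ne', ENNReal.rpow_one]
  calc ∫⁻ x, (∫⁻ y, k (x - y) * g y ∂μ) ^ r ∂μ
      ≤ ∫⁻ x, (∫⁻ y, k (x - y) ^ m * g y ^ c ∂μ) *
          (A ^ (1 / m - 1 / r) * B ^ (1 / c - 1 / r)) ^ r ∂μ := by
        refine lintegral_mono fun x => ?_
        refine (ENNReal.rpow_le_rpow (hpt x) hr0.le).trans_eq ?_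
        rw [ENNReal.mul_rpow_of_nonneg _ _ hr0.le, hrr]
    _ = (A * B) * (A ^ (1 / m - 1 / r) * B ^ (1 / c - 1 / r)) ^ r := by
        have hmeas : Measurable (Function.uncurry fun x y : G => k (x - y) ^ m * g y ^ c) := by
          have : Measurable fun z : G × G => k (z.1 - z.2) ^ m * g z.2 ^ c := by fun_prop
          exact this
        rw [lintegral_mul_const _ hmeas.lintegral_prod_right]
        congr 1
        rw [lintegral_lintegral_swap hmeas.aemeasurable]
        have (y : G) : ∫⁻ x, k (x - y) ^ m * g y ^ c ∂μ = A * g y ^ c := by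
          rw [lintegral_mul_const _ (by fun_prop)]
          rw [lintegral_sub_right_eq_self (fun z => k z ^ m) y]
        simp_rw [this]
        rw [lintegral_const_mul _ (by fun_prop)]
    _ = (A ^ (1 / m) * B ^ (1 / c)) ^ r := by
        rw [← hmul A hm0 hmr, ← hmul B hc0 hcr]
        simp only [ENNReal.mul_rpow_of_nonneg _ _ hr0.le, hrr]
        ring

/-- **Minkowski's integral inequality** for `ℝ≥0∞`-valued functions, with a prescribed bound `W`
for the inner norms. -/
theorem lintegral_rpow_lintegral_le {S X : Type*} [MeasurableSpace S] [MeasurableSpace X]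
    {μ : Measure S} {ν : Measure X} [SFinite μ] [SFinite ν] {H : S → X → ℝ≥0∞}
    (hH : Measurable (Function.uncurry H)) {W : S → ℝ≥0∞} (hW : Measurable W) {r : ℝ}
    (hr : 1 < r) (hHW : ∀ᵐ s ∂μ, ∫⁻ x, H s x ^ r ∂ν ≤ W s ^ r) :
    ∫⁻ x, (∫⁻ s, H s x ∂μ) ^ r ∂ν ≤ (∫⁻ s, W s ∂μ) ^ r := by
  have hr0 : 0 < r := by linarith
  by_cases hfin : ∫⁻ s, W s ∂μ = ⊤
  · simp [hfin, hr0]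
  have hWfin : ∀ᵐ s ∂μ, W s < ⊤ := ae_lt_top hW hfin
  set D : S → X → ℝ≥0∞ := fun s x => H s x ^ r * W s ^ (1 - r) with hD
  have hDm : Measurable (Function.uncurry D) := by
    have : Measurable fun z : S × X => (Function.uncurry H z) ^ r * W z.1 ^ (1 - r) := by fun_prop
    exact this
  have hDx (x : X) : Measurable fun s => D s x := hDm.comp measurable_prodMk_right
  have hpt : ∀ᵐ s ∂μ, ∀ᵐ x ∂ν, H s x ≤ D s x ^ (1 / r) * W s ^ (1 - 1 / r) := by
    filter_upwards [hHW, hWfin] with s hs hsfin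
    by_cases h0 : W s = 0
    · rw [h0, ENNReal.zero_rpow_of_pos hr0, nonpos_iff_eq_zero,
        lintegral_eq_zero_iff (by fun_prop)] at hs
      filter_upwards [hs] with x hx
      have : H s x = 0 := by simpa [hr0, hr0.le, not_lt.2 hr0.le] using hx
      simp [this]
    · refine Filter.Eventually.of_forall fun x => le_of_eq ?_
      rw [hD]
      simp only
      rw [ENNReal.mul_rpow_of_nonneg _ _ (by positivity), ← ENNReal.rpow_mul,
        ← ENNReal.rpow_mul, mul_one_div_cancel hr0.ne', ENNReal.rpow_one, mul_assoc,
        ← ENNReal.rpow_add _ _ h0 hsfin.ne]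
      have : (1 - r) * (1 / r) + (1 - 1 / r) = 0 := by field_simp; ring
      rw [this, ENNReal.rpow_zero, mul_one]
  have hpt' : ∀ᵐ x ∂ν, ∀ᵐ s ∂μ, H s x ≤ D s x ^ (1 / r) * W s ^ (1 - 1 / r) := by
    refine (Measure.ae_ae_comm (p := fun s x => H s x ≤ D s x ^ (1 / r) * W s ^ (1 - 1 / r)) ?_).1 hpt
    refine measurableSet_le hH ?_
    have : Measurable fun z : S × X => (Function.uncurry D z) ^ (1 / r) * W z.1 ^ (1 - 1 / r) := by
      fun_prop
    exact this
  have hri : 1 / r < 1 := by rw [div_lt_one hr0]; exact hr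
  calc ∫⁻ x, (∫⁻ s, H s x ∂μ) ^ r ∂ν
      ≤ ∫⁻ x, (∫⁻ s, D s x ∂μ) * (∫⁻ s, W s ∂μ) ^ (r - 1) ∂ν := by
        refine lintegral_mono_ae ?_
        filter_upwards [hpt'] with x hx
        have h1 : ∫⁻ s, H s x ∂μ ≤
            (∫⁻ s, D s x ∂μ) ^ (1 / r) * (∫⁻ s, W s ∂μ) ^ (1 - 1 / r) :=
          (lintegral_mono_ae hx).trans
            (ENNReal.lintegral_mul_norm_pow_le (hDx x).aemeasurable hW.aemeasurable
              (by positivity) (by linarith) (by ring))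
        refine (ENNReal.rpow_le_rpow h1 hr0.le).trans_eq ?_
        rw [ENNReal.mul_rpow_of_nonneg _ _ hr0.le, ← ENNReal.rpow_mul, ← ENNReal.rpow_mul,
          one_div_mul_cancel hr0.ne', ENNReal.rpow_one]
        congr 2
        field_simp
    _ = (∫⁻ s, ∫⁻ x, D s x ∂ν ∂μ) * (∫⁻ s, W s ∂μ) ^ (r - 1) := by
        rw [lintegral_mul_const _ hDm.lintegral_prod_left]
        rw [lintegral_lintegral_swap hDm.aemeasurable]
    _ ≤ (∫⁻ s, W s ∂μ) * (∫⁻ s, W s ∂μ) ^ (r - 1) := by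
        gcongr ?_ * _
        refine lintegral_mono_ae ?_
        filter_upwards [hHW, hWfin] with s hs hsfin
        rw [hD]
        simp only
        rw [lintegral_mul_const _ (by fun_prop)]
        by_cases h0 : W s = 0
        · rw [h0, ENNReal.zero_rpow_of_pos hr0, nonpos_iff_eq_zero] at hs
          simp [hs]
        · refine (mul_le_mul_left hs _).trans_eq ?_
          rw [← ENNReal.rpow_add _ _ h0 hsfin.ne]
          simp
    _ = (∫⁻ s, W s ∂μ) ^ r := by
        conv_lhs => rw [← ENNReal.rpow_one (∫⁻ s, W s ∂μ), ← ENNReal.rpow_mul,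
          ← ENNReal.rpow_add_of_nonneg _ _ zero_le_one (by linarith)]
        congr 1; ring

theorem contDiff_max_zero_pow (k : ℕ) : ContDiff ℝ k fun x : ℝ => max 0 x ^ (k + 1) := by
  induction k with
  | zero =>
    simp only [CharP.cast_eq_zero, zero_add, pow_one]
    exact contDiff_zero.2 (continuous_const.max continuous_id)
  | succ k ih =>
    have hd (x : ℝ) : HasDerivAt (fun x : ℝ => max 0 x ^ (k + 1 + 1))
        ((k + 2) * max 0 x ^ (k + 1)) x := by
      rcases lt_trichotomy x 0 with hx | rfl | hx
      · have : (fun x : ℝ => max 0 x ^ (k + 1 + 1)) =ᶠ[nhds x] fun _ => 0 := by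
          filter_upwards [gt_mem_nhds hx] with y hy
          simp [max_eq_left hy.le]
        simpa [max_eq_left hx.le] using (hasDerivAt_const x (0 : ℝ)).congr_of_eventuallyEq this
      · rw [hasDerivAt_iff_isLittleO_nhds_zero]
        simp only [zero_add, max_self, ne_eq, Nat.add_eq_zero_iff, one_ne_zero, and_false,
          not_false_eq_true, zero_pow, sub_zero, mul_zero, smul_zero]
        have h1 : (fun h : ℝ => max 0 h ^ (k + 1 + 1)) =O[nhds 0] fun h : ℝ => h ^ (k + 1 + 1) := by
          refine Asymptotics.IsBigO.of_bound 1 (Filter.Eventually.of_forall fun h => ?_)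
          rw [norm_pow, norm_pow, one_mul]
          gcongr
          rw [Real.norm_eq_abs, Real.norm_eq_abs, abs_of_nonneg (le_max_left _ _)]
          exact max_le (abs_nonneg _) (le_abs_self _)
        refine h1.trans_isLittleO ?_
        simpa using Asymptotics.isLittleO_pow_pow (𝕜 := ℝ) (m := 1) (n := k + 1 + 1) (by omega)
      · have : (fun x : ℝ => max 0 x ^ (k + 1 + 1)) =ᶠ[nhds x] fun x => x ^ (k + 1 + 1) := by
          filter_upwards [lt_mem_nhds hx] with y hy
          simp [max_eq_right (le_of_lt hy)]
        have h2 := (hasDerivAt_pow (k + 1 + 1) x).congr_of_eventuallyEq this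
        rw [max_eq_right hx.le]
        refine h2.congr_deriv ?_
        push_cast
        ring
    push_cast
    rw [contDiff_succ_iff_deriv]
    refine ⟨fun x => (hd x).differentiableAt, by simp, ?_⟩
    have : deriv (fun x : ℝ => max 0 x ^ (k + 1 + 1)) = fun x => ((k : ℝ) + 2) * max 0 x ^ (k + 1) :=
      funext fun x => (hd x).deriv
    rw [this]
    exact contDiff_const.mul ih

/-- The Bochner–Riesz multiplier `(1 - |ξ|²)₊ ^ (n + 1)`. -/
def rieszMultiplier (n : ℕ) (ξ : Rn n) : ℂ := ((max 0 (1 - ‖ξ‖ ^ 2) ^ (n + 1) : ℝ) : ℂ)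

theorem contDiff_rieszMultiplier (n : ℕ) : ContDiff ℝ n (rieszMultiplier n) := by
  have h : ContDiff ℝ n fun ξ : Rn n => max 0 (1 - ‖ξ‖ ^ 2) ^ (n + 1) :=
    (contDiff_max_zero_pow n).comp (contDiff_const.sub (contDiff_norm_sq ℝ))
  exact Complex.ofRealCLM.contDiff.comp h

theorem hasCompactSupport_rieszMultiplier (n : ℕ) : HasCompactSupport (rieszMultiplier n) := by
  refine HasCompactSupport.intro (isCompact_closedBall (0 : Rn n) 1) fun ξ hξ => ?_
  have : 1 < ‖ξ‖ := by simpa using hξ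
  have h2 : 1 - ‖ξ‖ ^ 2 ≤ 0 := by nlinarith
  simp [rieszMultiplier, max_eq_left h2]

theorem integrable_rieszMultiplier (n : ℕ) : Integrable (rieszMultiplier n) :=
  (contDiff_rieszMultiplier n).continuous.integrable_of_hasCompactSupport
    (hasCompactSupport_rieszMultiplier n)

theorem norm_fourierInv_le {n : ℕ} (g : Rn n → ℂ) (x : Rn n) : ‖𝓕⁻ g x‖ ≤ ∫ ξ, ‖g ξ‖ := by
  rw [Real.fourierInv_eq]
  refine (norm_integral_le_integral_norm _).trans_eq ?_
  simp

theorem exists_fourierInv_rieszMultiplier_le (n : ℕ) {θ : ℝ} (h0 : 0 ≤ θ) (hθ : θ ≤ n) :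
    ∃ C : ℝ, ∀ x : Rn n, ‖x‖ ^ θ * ‖𝓕⁻ (rieszMultiplier n) x‖ ≤ C := by
  obtain ⟨C, hC⟩ : ∃ C : ℝ, ∀ x : Rn n, ‖x‖ ^ n * ‖𝓕⁻ (rieszMultiplier n) x‖ ≤ C := by
    have h := fun w => Real.pow_mul_norm_iteratedFDeriv_fourier_le (V := Rn n) (K := 0) (N := n)
      (contDiff_rieszMultiplier n) (by
        intro k j hk hj
        refine Continuous.integrable_of_hasCompactSupport ?_ ?_
        · have := (contDiff_rieszMultiplier n).continuous_iteratedFDeriv (m := j)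
            (by exact_mod_cast hj)
          fun_prop
        · exact ((hasCompactSupport_rieszMultiplier n).iteratedFDeriv j).norm.mul_left)
      (k := 0) (n := n) le_rfl le_rfl w
    refine ⟨_, fun x => (le_of_eq ?_).trans (h (-x))⟩
    rw [Real.fourierInv_eq_fourier_neg, norm_neg, norm_iteratedFDeriv_zero]
  refine ⟨(∫ ξ, ‖rieszMultiplier n ξ‖) + C, fun x => ?_⟩
  have h1 : ‖x‖ ^ θ ≤ 1 + ‖x‖ ^ n := by
    rcases le_total ‖x‖ 1 with h | h
    · have := Real.rpow_le_one (norm_nonneg x) h h0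
      have : 0 ≤ ‖x‖ ^ n := by positivity
      linarith
    · have := Real.rpow_le_rpow_of_exponent_le h hθ
      rw [Real.rpow_natCast] at this
      linarith
  calc ‖x‖ ^ θ * ‖𝓕⁻ (rieszMultiplier n) x‖ ≤ (1 + ‖x‖ ^ n) * ‖𝓕⁻ (rieszMultiplier n) x‖ := by
        gcongr
    _ = ‖𝓕⁻ (rieszMultiplier n) x‖ + ‖x‖ ^ n * ‖𝓕⁻ (rieszMultiplier n) x‖ := by ring
    _ ≤ _ := add_le_add (norm_fourierInv_le _ x) (hC x)

theorem fourierInv_comp_smul {n : ℕ} (g : Rn n → ℂ) {a : ℝ} (ha : 0 < a) (x : Rn n) :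
    𝓕⁻ (fun ξ => g (a • ξ)) x = ((a ^ (-(n : ℝ)) : ℝ) : ℂ) * 𝓕⁻ g (a⁻¹ • x) := by
  rw [Real.fourierInv_eq, Real.fourierInv_eq]
  have := Measure.integral_comp_smul (volume : Measure (Rn n))
    (fun ξ => 𝐞 (inner ℝ ξ (a⁻¹ • x)) • g ξ) a
  have h2 (ξ : Rn n) : inner ℝ (a • ξ) (a⁻¹ • x) = inner ℝ ξ x := by
    rw [real_inner_smul_left, real_inner_smul_right, ← mul_assoc, mul_inv_cancel₀ ha.ne', one_mul]
  simp only [h2] at this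
  rw [this, finrank_euclideanSpace, Fintype.card_fin, abs_of_pos (by positivity),
    Real.rpow_neg ha.le, Real.rpow_natCast]
  rfl

/-- The superposition `∫_u^∞ (1 - u / v) ^ N v ^ (s - 1) e ^ (-v ^ α) dv` of Bochner–Riesz
multipliers. -/
def rieszSuperposition (α : ℝ) (N : ℕ) (s u : ℝ) : ℝ :=
  ∫ v in Set.Ioi u, (1 - u / v) ^ N * (v ^ (s - 1) * Real.exp (-v ^ α))

theorem integrableOn_rieszSuperposition {α : ℝ} (hα : 0 < α) (N : ℕ) {s u : ℝ} (hs : 0 ≤ s)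
    (hu : 0 < u) :
    IntegrableOn (fun v : ℝ => (1 - u / v) ^ N * (v ^ (s - 1) * Real.exp (-v ^ α)))
      (Set.Ioi u) := by
  have h := ((integrableOn_rpow_mul_exp_neg_rpow (p := α) (s := s) (by linarith) hα).mono_set
    (Set.Ioi_subset_Ioi hu.le)).const_mul u⁻¹
  refine h.mono' (by fun_prop) ?_
  filter_upwards [ae_restrict_mem measurableSet_Ioi] with v hv
  have hv : u < v := hv
  have hv0 : 0 < v := hu.trans hv
  have h1 : u / v ≤ 1 := (div_le_one hv0).2 hv.le
  have h2 : 0 ≤ u / v := by positivity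
  have h3 : (1 - u / v) ^ N ≤ 1 := pow_le_one₀ (by linarith) (by linarith)
  have h4 : 0 ≤ (1 - u / v) ^ N := pow_nonneg (by linarith) _
  rw [Real.norm_of_nonneg (by positivity), Real.rpow_sub_one hv0.ne']
  calc (1 - u / v) ^ N * (v ^ s / v * Real.exp (-v ^ α))
      ≤ 1 * (v ^ s / v * Real.exp (-v ^ α)) := by gcongr
    _ ≤ 1 * (v ^ s / u * Real.exp (-v ^ α)) := by gcongr
    _ = _ := by ring

theorem tendsto_rpow_mul_exp_neg_rpow {α : ℝ} (hα : 0 < α) (s : ℝ) :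
    Filter.Tendsto (fun v : ℝ => v ^ s * Real.exp (-v ^ α)) Filter.atTop (nhds 0) := by
  have h := (tendsto_rpow_mul_exp_neg_mul_atTop_nhds_zero (s / α) 1 one_pos).comp
    (tendsto_rpow_atTop hα)
  refine h.congr' ?_
  filter_upwards [Filter.eventually_gt_atTop 0] with v hv
  simp only [Function.comp]
  rw [← Real.rpow_mul hv.le, mul_div_cancel₀ _ hα.ne']
  simp

theorem hasDerivAt_rpow_mul_exp_neg_rpow (α s : ℝ) {v : ℝ} (hv : 0 < v) :
    HasDerivAt (fun v : ℝ => v ^ s * Real.exp (-v ^ α))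
      (s * (v ^ (s - 1) * Real.exp (-v ^ α)) -
        α * (v ^ (s + α - 1) * Real.exp (-v ^ α))) v := by
  have h1 := (Real.hasDerivAt_rpow_const (p := s) (Or.inl hv.ne'))
  have h2 := (Real.hasDerivAt_rpow_const (p := α) (Or.inl hv.ne')).fun_neg.exp
  refine (h1.fun_mul h2).congr_deriv ?_
  rw [show s + α - 1 = s + (α - 1) by ring, Real.rpow_add hv]
  ring

theorem rpow_mul_exp_neg_rpow_eq {α : ℝ} (hα : 0 < α) {s u : ℝ} (hs : 0 ≤ s) (hu : 0 < u) :
    u ^ s * Real.exp (-u ^ α) =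
      -s * rieszSuperposition α 0 s u + α * rieszSuperposition α 0 (s + α) u := by
  have i1 := (integrableOn_rieszSuperposition hα 0 hs hu).const_mul s
  have i2 := (integrableOn_rieszSuperposition hα 0 (add_nonneg hs hα.le) hu).const_mul α
  have h := integral_Ioi_of_hasDerivAt_of_tendsto
    (hasDerivAt_rpow_mul_exp_neg_rpow α s hu).continuousAt.continuousWithinAt
    (fun v hv => hasDerivAt_rpow_mul_exp_neg_rpow α s (hu.trans hv))
    (by simpa using! i1.sub i2) (tendsto_rpow_mul_exp_neg_rpow hα s)
  rw [integral_sub (by simpa using i1) (by simpa using i2), integral_const_mul,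
    integral_const_mul] at h
  simp only [rieszSuperposition, pow_zero, one_mul]
  linarith

theorem rieszSuperposition_eq {α : ℝ} (hα : 0 < α) (N : ℕ) {s u : ℝ} (hs : 0 ≤ s) (hu : 0 < u) :
    rieszSuperposition α N s u =
      (1 - s / (N + 1)) * rieszSuperposition α (N + 1) s u +
        α / (N + 1) * rieszSuperposition α (N + 1) (s + α) u := by
  have i0 := (integrableOn_rieszSuperposition hα N hs hu).const_mul (N + 1 : ℝ)
  have i1 := (integrableOn_rieszSuperposition hα (N + 1) hs hu).const_mul (s - (N + 1))
  have i2 := (integrableOn_rieszSuperposition hα (N + 1) (add_nonneg hs hα.le) hu).const_mul α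
  have hd (v : ℝ) (hv : 0 < v) : HasDerivAt
      (fun v : ℝ => (1 - u / v) ^ (N + 1) * (v ^ s * Real.exp (-v ^ α)))
      ((N + 1 : ℝ) * ((1 - u / v) ^ N * (v ^ (s - 1) * Real.exp (-v ^ α))) +
        (s - (N + 1)) * ((1 - u / v) ^ (N + 1) * (v ^ (s - 1) * Real.exp (-v ^ α))) -
        α * ((1 - u / v) ^ (N + 1) * (v ^ (s + α - 1) * Real.exp (-v ^ α)))) v := by
    have h1 : HasDerivAt (fun v : ℝ => 1 - u / v) (u / v ^ 2) v := by
      have := ((hasDerivAt_inv hv.ne').const_mul u).const_sub 1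
      exact this.congr_deriv (by field_simp)
    refine ((h1.fun_pow (N + 1)).fun_mul (hasDerivAt_rpow_mul_exp_neg_rpow α s hv)).congr_deriv ?_
    rw [show v ^ s = v ^ (s - 1) * v by rw [Real.rpow_sub_one hv.ne']; field_simp]
    have : u / v ^ 2 * v = 1 - (1 - u / v) := by field_simp; ring
    push_cast
    linear_combination ((N + 1 : ℝ) * (1 - u / v) ^ N * v ^ (s - 1) * Real.exp (-v ^ α)) * this
  have h := integral_Ioi_of_hasDerivAt_of_tendsto (m := 0)
    (hd u hu).continuousAt.continuousWithinAt
    (fun v hv => hd v (hu.trans hv))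
    ((i0.fun_add i1).sub i2) (by
      have h1 : Filter.Tendsto (fun v : ℝ => (1 - u / v) ^ (N + 1)) Filter.atTop (nhds 1) := by
        have := ((tendsto_const_nhds (x := u)).div_atTop Filter.tendsto_id).const_sub 1
        simpa using this.pow (N + 1)
      simpa using h1.mul (tendsto_rpow_mul_exp_neg_rpow hα s))
  rw [integral_sub (i0.fun_add i1) i2, integral_add i0 i1, integral_const_mul, integral_const_mul,
    integral_const_mul, div_self hu.ne'] at h
  change (N + 1 : ℝ) * rieszSuperposition α N s u +
    (s - (N + 1)) * rieszSuperposition α (N + 1) s u -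
      α * rieszSuperposition α (N + 1) (s + α) u = _ at h
  have hN : (N + 1 : ℝ) ≠ 0 := by positivity
  rw [sub_self, zero_pow (by omega), zero_mul, sub_zero] at h
  field_simp
  linarith

/-- `Ψ` is integrable and its inverse Fourier transform is `O(|x| ^ (-θ))`. -/
def HasFourierDecay {n : ℕ} (θ : ℝ) (Ψ : Rn n → ℂ) : Prop :=
  Integrable Ψ ∧ ∃ C : ℝ, ∀ x : Rn n, ‖x‖ ^ θ * ‖𝓕⁻ Ψ x‖ ≤ C

theorem HasFourierDecay.linear_combination {n : ℕ} {θ : ℝ} {Ψ₁ Ψ₂ Ψ : Rn n → ℂ}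
    (h₁ : HasFourierDecay θ Ψ₁) (h₂ : HasFourierDecay θ Ψ₂) (a₁ a₂ : ℂ)
    (h : ∀ᵐ ξ, Ψ ξ = a₁ * Ψ₁ ξ + a₂ * Ψ₂ ξ) : HasFourierDecay θ Ψ := by
  obtain ⟨i₁, C₁, hC₁⟩ := h₁
  obtain ⟨i₂, C₂, hC₂⟩ := h₂
  refine ⟨((i₁.const_mul a₁).add (i₂.const_mul a₂)).congr (h.mono fun ξ hξ => hξ.symm),
    ‖a₁‖ * C₁ + ‖a₂‖ * C₂, fun x => ?_⟩
  have key : 𝓕⁻ Ψ x = a₁ * 𝓕⁻ Ψ₁ x + a₂ * 𝓕⁻ Ψ₂ x := by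
    simp only [Real.fourierInv_eq]
    rw [← integral_const_mul, ← integral_const_mul, ← integral_add]
    · refine integral_congr_ae (h.mono fun ξ hξ => ?_)
      simp only [hξ, Circle.smul_def, smul_eq_mul]
      ring
    · refine Integrable.const_mul ?_ _
      simpa using (Real.fourierIntegral_convergent_iff (-x)).2 i₁
    · refine Integrable.const_mul ?_ _
      simpa using (Real.fourierIntegral_convergent_iff (-x)).2 i₂
  have hx : 0 ≤ ‖x‖ ^ θ := by positivity
  calc ‖x‖ ^ θ * ‖𝓕⁻ Ψ x‖ ≤ ‖x‖ ^ θ * (‖a₁‖ * ‖𝓕⁻ Ψ₁ x‖ + ‖a₂‖ * ‖𝓕⁻ Ψ₂ x‖) := by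
        rw [key]
        gcongr
        exact (norm_add_le _ _).trans_eq (by simp)
    _ = ‖a₁‖ * (‖x‖ ^ θ * ‖𝓕⁻ Ψ₁ x‖) + ‖a₂‖ * (‖x‖ ^ θ * ‖𝓕⁻ Ψ₂ x‖) := by ring
    _ ≤ _ := by gcongr <;> simp_all

/-- The integrand of the superposition of dilated Bochner–Riesz multipliers. -/
def rieszLayer (n : ℕ) (α s v : ℝ) (ξ : Rn n) : ℂ :=
  rieszMultiplier n (v ^ (-(1 / 2) : ℝ) • ξ) * ((v ^ (s - 1) * Real.exp (-v ^ α) : ℝ) : ℂ)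

theorem rieszSuperposition_eq_integral_rieszLayer (n : ℕ) (α s : ℝ) (ξ : Rn n) :
    (rieszSuperposition α (n + 1) s (‖ξ‖ ^ 2) : ℂ) =
      ∫ v in Set.Ioi (0 : ℝ), rieszLayer n α s v ξ := by
  have hnorm {v : ℝ} (hv : 0 < v) : ‖v ^ (-(1 / 2) : ℝ) • ξ‖ ^ 2 = ‖ξ‖ ^ 2 / v := by
    rw [norm_smul, Real.norm_of_nonneg (by positivity), mul_pow, ← Real.rpow_natCast,
      ← Real.rpow_mul hv.le]
    norm_num
    rw [Real.rpow_neg_one]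
    ring
  have hsub := setIntegral_eq_of_subset_of_forall_sdiff_eq_zero (μ := volume)
    (f := fun v => rieszLayer n α s v ξ) measurableSet_Ioi
    (Set.Ioi_subset_Ioi (sq_nonneg ‖ξ‖)) (by
      rintro v ⟨hv, hv'⟩
      have hv : 0 < v := hv
      have hv' : v ≤ ‖ξ‖ ^ 2 := by simpa using hv'
      have : 1 - ‖ξ‖ ^ 2 / v ≤ 0 := sub_nonpos.2 ((one_le_div hv).2 hv')
      simp only [rieszLayer, rieszMultiplier]
      rw [hnorm hv, max_eq_left this]
      simp)
  rw [hsub, rieszSuperposition, ← integral_complex_ofReal]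
  refine setIntegral_congr_fun measurableSet_Ioi fun v hv => ?_
  have hv : ‖ξ‖ ^ 2 < v := hv
  have hv0 : 0 < v := (sq_nonneg _).trans_lt hv
  have : 0 ≤ 1 - ‖ξ‖ ^ 2 / v := sub_nonneg.2 ((div_le_one hv0).2 hv.le)
  simp only [rieszLayer, rieszMultiplier]
  rw [hnorm hv0, max_eq_right this]
  push_cast
  ring

theorem rpow_neg_half_rpow_neg (n : ℕ) {v : ℝ} (hv : 0 < v) :
    (v ^ (-(1 / 2) : ℝ)) ^ (-(n : ℝ)) = v ^ ((n : ℝ) / 2) := by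
  rw [← Real.rpow_mul hv.le]; congr 1; ring

theorem integral_norm_rieszLayer (n : ℕ) (α s : ℝ) {v : ℝ} (hv : 0 < v) :
    ∫ ξ, ‖rieszLayer n α s v ξ‖ =
      (∫ ξ, ‖rieszMultiplier n ξ‖) * (v ^ (s - 1 + (n : ℝ) / 2) * Real.exp (-v ^ α)) := by
  have h2 : ∫ ξ : Rn n, ‖rieszMultiplier n (v ^ (-(1 / 2) : ℝ) • ξ)‖ =
      v ^ ((n : ℝ) / 2) * ∫ ξ, ‖rieszMultiplier n ξ‖ := by
    have := Measure.integral_comp_smul (volume : Measure (Rn n))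
      (fun ξ => ‖rieszMultiplier n ξ‖) (v ^ (-(1 / 2) : ℝ))
    rw [this, finrank_euclideanSpace, Fintype.card_fin, abs_of_pos (by positivity), smul_eq_mul,
      ← rpow_neg_half_rpow_neg n hv, Real.rpow_neg (x := v ^ (-(1 / 2) : ℝ)) (by positivity),
      Real.rpow_natCast]
  have hw : 0 ≤ v ^ (s - 1) * Real.exp (-v ^ α) := by positivity
  simp only [rieszLayer, norm_mul, Complex.norm_real, Real.norm_of_nonneg hw]
  rw [integral_mul_const, h2, Real.rpow_add hv]
  ring

theorem measurable_rieszLayer (n : ℕ) (α s : ℝ) :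
    Measurable (Function.uncurry (rieszLayer n α s)) := by
  have hg : Measurable (rieszMultiplier n) := (contDiff_rieszMultiplier n).continuous.measurable
  have h1 : Measurable fun z : ℝ × Rn n => z.1 ^ (-(1 / 2) : ℝ) • z.2 := by fun_prop
  have h2 : Measurable fun z : ℝ × Rn n =>
      ((z.1 ^ (s - 1) * Real.exp (-z.1 ^ α) : ℝ) : ℂ) := by fun_prop
  exact (hg.comp h1).mul h2

theorem integrable_rieszLayer {n : ℕ} (hn : 1 ≤ n) {α s : ℝ} (hα : 0 < α) (hs : 0 ≤ s) :
    Integrable (Function.uncurry (rieszLayer n α s))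
      ((volume.restrict (Set.Ioi 0)).prod (volume : Measure (Rn n))) := by
  have hn' : (1 : ℝ) ≤ n := by exact_mod_cast hn
  rw [integrable_prod_iff (measurable_rieszLayer n α s).aestronglyMeasurable]
  refine ⟨?_, ?_⟩
  · filter_upwards [ae_restrict_mem measurableSet_Ioi] with v hv
    have hv : 0 < v := hv
    have h : v ^ (-(1 / 2) : ℝ) ≠ 0 := by positivity
    exact ((integrable_rieszMultiplier n).comp_smul h).mul_const
      ((v ^ (s - 1) * Real.exp (-v ^ α) : ℝ) : ℂ)
  · have h1 := (integrableOn_rpow_mul_exp_neg_rpow (p := α) (s := s - 1 + (n : ℝ) / 2)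
      (by linarith) hα).const_mul (∫ ξ, ‖rieszMultiplier n ξ‖)
    refine h1.congr ?_
    filter_upwards [ae_restrict_mem measurableSet_Ioi] with v hv
    exact (integral_norm_rieszLayer n α s hv).symm

theorem norm_fourierInv_rieszLayer (n : ℕ) (α s : ℝ) {v : ℝ} (hv : 0 < v) (x : Rn n) :
    ‖𝓕⁻ (rieszLayer n α s v) x‖ = v ^ (s - 1 + (n : ℝ) / 2) * Real.exp (-v ^ α) *
      ‖𝓕⁻ (rieszMultiplier n) (v ^ (1 / 2 : ℝ) • x)‖ := by
  have h1 : 𝓕⁻ (rieszLayer n α s v) x =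
      𝓕⁻ (fun ξ => rieszMultiplier n (v ^ (-(1 / 2) : ℝ) • ξ)) x *
        ((v ^ (s - 1) * Real.exp (-v ^ α) : ℝ) : ℂ) := by
    simp only [Real.fourierInv_eq, rieszLayer, Circle.smul_def, smul_eq_mul]
    rw [← integral_mul_const]
    simp only [mul_assoc]
  have hw : 0 ≤ v ^ (s - 1) * Real.exp (-v ^ α) := by positivity
  have hw' : 0 ≤ v ^ ((n : ℝ) / 2) := by positivity
  rw [h1, fourierInv_comp_smul _ (by positivity), rpow_neg_half_rpow_neg n hv, norm_mul, norm_mul,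
    Complex.norm_real, Complex.norm_real, Real.norm_of_nonneg hw, Real.norm_of_nonneg hw',
    Real.rpow_add hv, ← Real.rpow_neg hv.le, neg_neg]
  ring

theorem fourierInv_integral {n : ℕ} {X : Type*} [MeasurableSpace X] {μ : Measure X} [SFinite μ]
    {G : X → Rn n → ℂ} (hG : Integrable (Function.uncurry G) (μ.prod volume)) (x : Rn n) :
    𝓕⁻ (fun ξ => ∫ v, G v ξ ∂μ) x = ∫ v, 𝓕⁻ (G v) x ∂μ := by
  simp only [Real.fourierInv_eq, Circle.smul_def]
  rw [integral_integral_swap]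
  · simp only [integral_smul]
  · have : Measurable fun z : X × Rn n => (𝐞 (inner ℝ z.2 x) : ℂ) := by
      have hc : Continuous fun ξ : Rn n => (𝐞 (inner ℝ ξ x) : ℂ) := by fun_prop
      exact hc.measurable.comp measurable_snd
    exact hG.bdd_mul (c := 1) this.aestronglyMeasurable
      (Filter.Eventually.of_forall fun z => (Circle.norm_coe _).le)

theorem hasFourierDecay_rieszSuperposition_top {n : ℕ} (hn : 1 ≤ n) {α θ : ℝ} (hα : 0 < α)
    (hθ0 : 0 ≤ θ) (hθ : θ < n) {s : ℝ} (hs : 0 ≤ s) :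
    HasFourierDecay θ fun ξ : Rn n => (rieszSuperposition α (n + 1) s (‖ξ‖ ^ 2) : ℂ) := by
  have hGi := integrable_rieszLayer hn hα hs
  simp only [rieszSuperposition_eq_integral_rieszLayer]
  obtain ⟨C, hC⟩ := exists_fourierInv_rieszMultiplier_le n hθ0 hθ.le
  refine ⟨hGi.integral_prod_right, ∫ v in Set.Ioi (0 : ℝ),
    C * (v ^ (s - 1 + ((n : ℝ) / 2 - θ / 2)) * Real.exp (-v ^ α)), fun x => ?_⟩
  have hx : 0 ≤ ‖x‖ ^ θ := by positivity
  rw [fourierInv_integral hGi, ← Real.norm_of_nonneg hx, ← norm_smul, ← integral_smul]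
  refine norm_integral_le_of_norm_le ((integrableOn_rpow_mul_exp_neg_rpow
    (by linarith) hα).const_mul C) ?_
  filter_upwards [ae_restrict_mem measurableSet_Ioi] with v hv
  have hv : 0 < v := hv
  rw [norm_smul, Real.norm_of_nonneg hx, norm_fourierInv_rieszLayer n α s hv]
  have h := hC (v ^ (1 / 2 : ℝ) • x)
  rw [norm_smul, Real.norm_of_nonneg (by positivity), Real.mul_rpow (by positivity) (by positivity),
    ← Real.rpow_mul hv.le] at h
  have hsplit : v ^ (s - 1 + (n : ℝ) / 2) =
      v ^ (s - 1 + ((n : ℝ) / 2 - θ / 2)) * v ^ (1 / 2 * θ) := by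
    rw [← Real.rpow_add hv]; congr 1; ring
  rw [hsplit]
  calc _ = (v ^ (1 / 2 * θ) * ‖x‖ ^ θ * ‖𝓕⁻ (rieszMultiplier n) (v ^ (1 / 2 : ℝ) • x)‖) *
        (v ^ (s - 1 + ((n : ℝ) / 2 - θ / 2)) * Real.exp (-v ^ α)) := by ring
    _ ≤ _ := by gcongr

theorem hasFourierDecay_rieszSuperposition {n : ℕ} (hn : 1 ≤ n) {α θ : ℝ} (hα : 0 < α)
    (hθ0 : 0 ≤ θ) (hθ : θ < n) {N : ℕ} (hN : N ≤ n + 1) {s : ℝ} (hs : 0 ≤ s) :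
    HasFourierDecay θ fun ξ : Rn n => (rieszSuperposition α N s (‖ξ‖ ^ 2) : ℂ) := by
  have : Nonempty (Fin n) := ⟨⟨0, hn⟩⟩
  induction hN using Nat.decreasingInduction generalizing s with
  | self => exact hasFourierDecay_rieszSuperposition_top hn hα hθ0 hθ hs
  | of_succ N _ ih =>
    refine (ih hs).linear_combination (ih (add_nonneg hs hα.le)) (1 - s / (N + 1) : ℝ)
      (α / (N + 1) : ℝ) ?_
    filter_upwards [Measure.ae_ne volume (0 : Rn n)] with ξ hξ
    rw [rieszSuperposition_eq hα N hs (by positivity)]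
    push_cast
    ring

theorem hasFourierDecay_heatSymbol {n : ℕ} (hn : 1 ≤ n) {α ν θ : ℝ} (hα : 0 < α) (hν : 0 ≤ ν)
    (hθ0 : 0 ≤ θ) (hθ : θ < n) :
    HasFourierDecay θ fun ξ : Rn n =>
      ((‖ξ‖ ^ ν * Real.exp (-(1 * ‖ξ‖ ^ (2 * α))) : ℝ) : ℂ) := by
  have : Nonempty (Fin n) := ⟨⟨0, hn⟩⟩
  have hs : 0 ≤ ν / 2 := by positivity
  refine (hasFourierDecay_rieszSuperposition hn hα hθ0 hθ (Nat.zero_le _) hs).linear_combination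
    (hasFourierDecay_rieszSuperposition hn hα hθ0 hθ (Nat.zero_le _) (add_nonneg hs hα.le))
    (-(ν / 2) : ℝ) (α : ℝ) ?_
  filter_upwards [Measure.ae_ne volume (0 : Rn n)] with ξ hξ
  have h := rpow_mul_exp_neg_rpow_eq hα hs (u := ‖ξ‖ ^ 2) (by positivity)
  rw [← Real.rpow_natCast, ← Real.rpow_mul (norm_nonneg _), ← Real.rpow_mul (norm_nonneg _)] at h
  rw [one_mul, show ν = ((2 : ℕ) : ℝ) * (ν / 2) by push_cast; ring,
    show 2 * α = ((2 : ℕ) : ℝ) * α by push_cast; ring, h]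
  push_cast
  simp

theorem heatKernel_eq_smul (n : ℕ) {α : ℝ} (hα : 0 < α) (ν : ℝ) {t : ℝ} (ht : 0 < t) (x : Rn n) :
    heatKernel n α ν t x = ((t ^ (-(ν / (2 * α)) - n / (2 * α)) : ℝ) : ℂ) *
      heatKernel n α ν 1 (t ^ (-(1 / (2 * α))) • x) := by
  set g : Rn n → ℂ := fun ξ => ((‖ξ‖ ^ ν * Real.exp (-(1 * ‖ξ‖ ^ (2 * α))) : ℝ) : ℂ) with hg
  set a : ℝ := t ^ (1 / (2 * α)) with ha
  have ha0 : 0 < a := by positivity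
  have hsymb (ξ : Rn n) : ((‖ξ‖ ^ ν * Real.exp (-(t * ‖ξ‖ ^ (2 * α))) : ℝ) : ℂ) =
      g (a • ξ) * ((t ^ (-(ν / (2 * α))) : ℝ) : ℂ) := by
    simp only [hg]
    rw [← Complex.ofReal_mul, norm_smul, Real.norm_of_nonneg ha0.le,
      Real.mul_rpow ha0.le (norm_nonneg _), Real.mul_rpow ha0.le (norm_nonneg _), ha,
      ← Real.rpow_mul ht.le, ← Real.rpow_mul ht.le,
      show 1 / (2 * α) * (2 * α) = 1 by field_simp, Real.rpow_one, Real.rpow_neg ht.le,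
      show 1 / (2 * α) * ν = ν / (2 * α) by ring, one_mul]
    have : t ^ (ν / (2 * α)) ≠ 0 := by positivity
    congr 1
    field_simp
  have h1 : heatKernel n α ν t x =
      𝓕⁻ (fun ξ => g (a • ξ)) x * ((t ^ (-(ν / (2 * α))) : ℝ) : ℂ) := by
    simp only [heatKernel, hsymb, Real.fourierInv_eq, Circle.smul_def, smul_eq_mul]
    rw [← integral_mul_const]
    simp only [mul_assoc]
  have h2 : a ^ (-(n : ℝ)) * t ^ (-(ν / (2 * α))) = t ^ (-(ν / (2 * α)) - n / (2 * α)) := by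
    rw [ha, ← Real.rpow_mul ht.le, ← Real.rpow_add ht]
    congr 1
    ring
  rw [h1, fourierInv_comp_smul g ha0 x, ← h2, ha, ← Real.rpow_neg ht.le]
  push_cast
  simp only [heatKernel, hg]
  ring

theorem continuous_heatKernel_one {n : ℕ} (hn : 1 ≤ n) {α ν : ℝ} (hα : 0 < α) (hν : 0 ≤ ν) :
    Continuous (heatKernel n α ν 1) := by
  have hi := (hasFourierDecay_heatSymbol hn hα hν le_rfl (by exact_mod_cast hn)).1
  have h := VectorFourier.fourierIntegral_continuous Real.continuous_fourierChar
    (L := innerₗ (Rn n)) continuous_inner hi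
  have h2 := h.comp continuous_neg
  refine h2.congr fun x => ?_
  rw [heatKernel, Real.fourierInv_eq_fourier_neg]
  rfl

theorem lintegral_heatKernel_one_lt_top {n : ℕ} (hn : 1 ≤ n) {α ν m : ℝ} (hα : 0 < α)
    (hν : 0 ≤ ν) (hm : 1 < m) : ∫⁻ x, ‖heatKernel n α ν 1 x‖ₑ ^ m < ⊤ := by
  have hn0 : (0 : ℝ) < n := by exact_mod_cast hn
  have hm0 : 0 < m := by linarith
  have hnm : (n : ℝ) / m < n := div_lt_self hn0 hm
  have hnm0 : 0 < (n : ℝ) / m := by positivity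
  set θ : ℝ := (n / m + n) / 2 with hθ
  have hθ0 : 0 < θ := by positivity
  obtain ⟨-, C₀, hC₀⟩ := hasFourierDecay_heatSymbol hn hα hν le_rfl hn0
  obtain ⟨-, C₁, hC₁⟩ := hasFourierDecay_heatSymbol hn hα hν hθ0.le (by linarith : θ < n)
  have hbound (x : Rn n) : ‖heatKernel n α ν 1 x‖ ≤ 2 ^ θ * (C₀ + C₁) * (1 + ‖x‖) ^ (-θ) := by
    have h0 := hC₀ x
    have h1 := hC₁ x
    rw [Real.rpow_zero, one_mul] at h0
    rw [← heatKernel] at h0 h1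
    have h2 : (1 + ‖x‖) ^ θ ≤ 2 ^ θ * (1 + ‖x‖ ^ θ) := by
      have hx : 0 ≤ ‖x‖ ^ θ := by positivity
      rcases le_total ‖x‖ 1 with h | h
      · calc (1 + ‖x‖) ^ θ ≤ 2 ^ θ := by gcongr; linarith
          _ ≤ _ := le_mul_of_one_le_right (by positivity) (by linarith)
      · calc (1 + ‖x‖) ^ θ ≤ (2 * ‖x‖) ^ θ := by gcongr; linarith
          _ = 2 ^ θ * ‖x‖ ^ θ := Real.mul_rpow (by positivity) (by positivity)
          _ ≤ _ := by gcongr; linarith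
    rw [Real.rpow_neg (by positivity), ← div_eq_mul_inv, le_div_iff₀ (by positivity)]
    calc ‖heatKernel n α ν 1 x‖ * (1 + ‖x‖) ^ θ
        ≤ ‖heatKernel n α ν 1 x‖ * (2 ^ θ * (1 + ‖x‖ ^ θ)) := by gcongr
      _ = 2 ^ θ * (‖heatKernel n α ν 1 x‖ + ‖x‖ ^ θ * ‖heatKernel n α ν 1 x‖) := by ring
      _ ≤ _ := by gcongr
  have hM : 0 ≤ 2 ^ θ * (C₀ + C₁) := by
    have := hbound 0
    simp only [norm_zero, add_zero, Real.one_rpow, mul_one] at this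
    exact (norm_nonneg _).trans this
  have hpt (x : Rn n) : ‖heatKernel n α ν 1 x‖ₑ ^ m ≤
      ENNReal.ofReal ((2 ^ θ * (C₀ + C₁)) ^ m) * ENNReal.ofReal ((1 + ‖x‖) ^ (-(θ * m))) := by
    rw [← ofReal_norm, ENNReal.ofReal_rpow_of_nonneg (norm_nonneg _) hm0.le,
      ← ENNReal.ofReal_mul (by positivity)]
    refine ENNReal.ofReal_le_ofReal ?_
    calc _ ≤ (2 ^ θ * (C₀ + C₁) * (1 + ‖x‖) ^ (-θ)) ^ m := by gcongr; exact hbound x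
      _ = _ := by
        rw [Real.mul_rpow hM (by positivity), ← Real.rpow_mul (by positivity), neg_mul]
  refine (lintegral_mono hpt).trans_lt ?_
  rw [lintegral_const_mul' _ _ ENNReal.ofReal_ne_top]
  refine ENNReal.mul_lt_top ENNReal.ofReal_lt_top (finite_integral_one_add_norm ?_)
  rw [finrank_euclideanSpace, Fintype.card_fin]
  have : (n : ℝ) = n / m * m := by field_simp
  calc (n : ℝ) = n / m * m := this
    _ < θ * m := by gcongr; linarith

theorem lintegral_comp_smul_Rn {n : ℕ} {f : Rn n → ℝ≥0∞} (hf : Measurable f) {b : ℝ} (hb : 0 < b) :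
    ∫⁻ x, f (b • x) = ENNReal.ofReal (b ^ (-(n : ℝ))) * ∫⁻ x, f x := by
  rw [← lintegral_map (μ := volume) hf (measurable_const_smul b),
    Measure.map_addHaar_smul _ hb.ne', lintegral_smul_measure, finrank_euclideanSpace,
    Fintype.card_fin, abs_of_pos (by positivity), Real.rpow_neg hb.le, Real.rpow_natCast,
    smul_eq_mul]

theorem exists_lintegral_heatKernel_le {n : ℕ} (hn : 1 ≤ n) {α ν m : ℝ} (hα : 0 < α)
    (hν : 0 ≤ ν) (hm : 1 < m) :
    ∃ C : ℝ, 0 < C ∧ ∀ t : ℝ, 0 < t → (∫⁻ x, ‖heatKernel n α ν t x‖ₑ ^ m) ^ (1 / m) ≤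
      ENNReal.ofReal (C * t ^ (-(ν / (2 * α) + n / (2 * α) * (1 - 1 / m)))) := by
  have hm0 : 0 < m := by linarith
  have hk : Measurable fun x => ‖heatKernel n α ν 1 x‖ₑ ^ m :=
    ((continuous_heatKernel_one hn hα hν).measurable.enorm).pow_const m
  have hfin := lintegral_heatKernel_one_lt_top hn hα hν hm
  set A := ∫⁻ x, ‖heatKernel n α ν 1 x‖ₑ ^ m with hA
  have hAfin : A ^ (1 / m) ≠ ⊤ := ENNReal.rpow_ne_top_of_nonneg (by positivity) hfin.ne
  refine ⟨(A ^ (1 / m)).toReal + 1, by positivity, fun t ht => ?_⟩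
  have hpt (x : Rn n) : ‖heatKernel n α ν t x‖ₑ ^ m =
      ENNReal.ofReal ((t ^ (-(ν / (2 * α)) - n / (2 * α))) ^ m) *
        ‖heatKernel n α ν 1 (t ^ (-(1 / (2 * α))) • x)‖ₑ ^ m := by
    rw [heatKernel_eq_smul n hα ν ht, enorm_mul, ENNReal.mul_rpow_of_nonneg _ _ hm0.le,
      ← ofReal_norm (_ : ℂ), Complex.norm_real, Real.norm_of_nonneg (by positivity),
      ENNReal.ofReal_rpow_of_nonneg (by positivity) hm0.le]
  simp_rw [hpt]
  rw [lintegral_const_mul' _ _ ENNReal.ofReal_ne_top,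
    lintegral_comp_smul_Rn hk (by positivity), ← mul_assoc,
    ← ENNReal.ofReal_mul (by positivity), ENNReal.mul_rpow_of_nonneg _ _ (by positivity),
    ENNReal.ofReal_rpow_of_nonneg (by positivity) (by positivity), mul_comm (_ + 1),
    ENNReal.ofReal_mul (by positivity)]
  gcongr ?_ * ?_
  · refine ENNReal.ofReal_le_ofReal (le_of_eq ?_)
    rw [← Real.rpow_mul ht.le, ← Real.rpow_mul ht.le, ← Real.rpow_add ht, ← Real.rpow_mul ht.le]
    congr 1
    field_simp
    ring
  · rw [← hA]
    calc A ^ (1 / m) = ENNReal.ofReal (A ^ (1 / m)).toReal := (ENNReal.ofReal_toReal hAfin).symm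
      _ ≤ _ := ENNReal.ofReal_le_ofReal (by linarith)

theorem lintegral_sub_rpow_neg {a t : ℝ} (ha : a < 1) (ht : 0 < t) :
    ∫⁻ s in Set.Ico 0 t, ENNReal.ofReal ((t - s) ^ (-a)) =
      ENNReal.ofReal (t ^ (1 - a) / (1 - a)) := by
  have hi : IntervalIntegrable (fun s => (t - s) ^ (-a)) volume 0 t := by
    have := (intervalIntegral.intervalIntegrable_rpow' (a := 0) (b := t)
      (by linarith : -1 < -a)).comp_sub_left t
    simpa using this.symm
  have hI : ∫ s in (0 : ℝ)..t, (t - s) ^ (-a) = t ^ (1 - a) / (1 - a) := by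
    rw [intervalIntegral.integral_comp_sub_left (fun s => s ^ (-a)) t, sub_self, sub_zero,
      integral_rpow (Or.inl (by linarith)), show -a + 1 = 1 - a by ring,
      Real.zero_rpow (by linarith), sub_zero]
  rw [setLIntegral_congr (Ico_ae_eq_Ioc (μ := volume)), ← hI, intervalIntegral.integral_of_le ht.le,
    ofReal_integral_eq_lintegral_ofReal ((intervalIntegrable_iff_integrableOn_Ioc_of_le ht.le).1 hi)]
  filter_upwards [ae_restrict_mem measurableSet_Ioc] with s hs
  exact Real.rpow_nonneg (by linarith [hs.2]) _

theorem eLpNorm_ofReal_eq_lintegral {X E : Type*} [MeasurableSpace X] [NormedAddCommGroup E]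
    {μ : Measure X} (f : X → E) {p : ℝ} (hp : 0 < p) :
    eLpNorm f (ENNReal.ofReal p) μ = (∫⁻ x, ‖f x‖ₑ ^ p ∂μ) ^ (1 / p) := by
  rw [eLpNorm_eq_lintegral_rpow_enorm_toReal (by simpa using hp) ENNReal.ofReal_ne_top,
    ENNReal.toReal_ofReal hp.le]

theorem exists_measurable_enorm_heatKernel {n : ℕ} (hn : 1 ≤ n) {α ν : ℝ} (hα : 0 < α)
    (hν : 0 ≤ ν) : ∃ k : ℝ → Rn n → ℝ≥0∞, Measurable (Function.uncurry k) ∧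
      ∀ t, 0 < t → ∀ x, k t x = ‖heatKernel n α ν t x‖ₑ := by
  refine ⟨fun t x => ‖((t ^ (-(ν / (2 * α)) - n / (2 * α)) : ℝ) : ℂ) *
    heatKernel n α ν 1 (t ^ (-(1 / (2 * α))) • x)‖ₑ, ?_, fun t ht x => ?_⟩
  · have hK := (continuous_heatKernel_one hn hα hν).measurable
    have h1 : Measurable fun z : ℝ × Rn n => z.1 ^ (-(1 / (2 * α))) • z.2 := by fun_prop
    have h2 : Measurable fun z : ℝ × Rn n =>
        ((z.1 ^ (-(ν / (2 * α)) - n / (2 * α)) : ℝ) : ℂ) := by fun_prop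
    exact (h2.mul (hK.comp h1)).enorm
  · rw [heatKernel_eq_smul n hα ν ht]

/-- The space-time estimate for the Duhamel integral, with the `L^m` norm of the kernel and the
Hölder exponents in time left as parameters. -/
theorem eLpNorm_duhamel_le {n : ℕ} (hn : 1 ≤ n) {α ν m c r γ γ' e C t : ℝ} (hα : 0 < α)
    (hν : 0 ≤ ν) (hm : 1 < m) (hc : 1 < c) (hr : 1 < r) (hrel : 1 / m + 1 / c = 1 + 1 / r)
    (hγ : γ'.HolderConjugate γ) (he : e * γ' < 1) (hC : 0 < C)
    (hK : ∀ t : ℝ, 0 < t → (∫⁻ x, ‖heatKernel n α ν t x‖ₑ ^ m) ^ (1 / m) ≤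
      ENNReal.ofReal (C * t ^ (-e)))
    (ht : 0 < t) {f : ℝ → Rn n → ℂ}
    (hf : AEStronglyMeasurable (Function.uncurry f) ((volume : Measure ℝ).prod volume)) :
    eLpNorm (fun x : Rn n => ∫ s in Set.Ico (0 : ℝ) t,
        ∫ y : Rn n, heatKernel n α ν (t - s) (x - y) * f s y) (ENNReal.ofReal r) volume ≤
      ENNReal.ofReal (C * (t ^ (1 - e * γ') / (1 - e * γ')) ^ (1 / γ')) *
        (∫⁻ s in Set.Ico (0 : ℝ) t, eLpNorm (f s) (ENNReal.ofReal c) volume ^ γ) ^ (1 / γ) := by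
  have hr0 : 0 < r := by linarith
  have hc0 : 0 < c := by linarith
  obtain ⟨k, hkm, hk⟩ := exists_measurable_enorm_heatKernel hn hα hν
  set f' : ℝ × Rn n → ℂ := hf.mk _ with hf'
  have hf'm : Measurable f' := hf.stronglyMeasurable_mk.measurable
  have hff' : ∀ᵐ s, ∀ᵐ y, f s y = f' (s, y) := Measure.ae_ae_of_ae_prod hf.ae_eq_mk
  set g : ℝ → Rn n → ℝ≥0∞ := fun s y => ‖f' (s, y)‖ₑ with hg
  have hgm : Measurable (Function.uncurry g) := hf'm.enorm
  have hgs (s : ℝ) : Measurable (g s) := hgm.comp measurable_prodMk_left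
  have hks (s : ℝ) : Measurable (k s) := hkm.comp measurable_prodMk_left
  set H : ℝ → Rn n → ℝ≥0∞ := fun s x => ∫⁻ y, k (t - s) (x - y) * g s y with hH
  have hHm : Measurable (Function.uncurry H) := by
    have h1 : Measurable fun z : (ℝ × Rn n) × Rn n => (t - z.1.1, z.1.2 - z.2) := by fun_prop
    have h2 : Measurable fun z : (ℝ × Rn n) × Rn n => (z.1.1, z.2) := by fun_prop
    exact ((hkm.comp h1).mul (hgm.comp h2)).lintegral_prod_right'
  set F : ℝ → ℝ≥0∞ := fun s => (∫⁻ y, g s y ^ c) ^ (1 / c) with hF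
  have hFm : Measurable F := by
    have h1 : Measurable fun z : ℝ × Rn n => Function.uncurry g z ^ c := hgm.pow_const c
    exact h1.lintegral_prod_right'.pow_const _
  set W : ℝ → ℝ≥0∞ := fun s => ENNReal.ofReal (C * (t - s) ^ (-e)) * F s with hW
  have hwm : Measurable fun s : ℝ => ENNReal.ofReal (C * (t - s) ^ (-e)) := by fun_prop
  have hWm : Measurable W := hwm.mul hFm
  have hpt (x : Rn n) : ‖∫ s in Set.Ico (0 : ℝ) t,
      ∫ y : Rn n, heatKernel n α ν (t - s) (x - y) * f s y‖ₑ ≤ ∫⁻ s in Set.Ico (0 : ℝ) t, H s x := by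
    refine (enorm_integral_le_lintegral_enorm _).trans (lintegral_mono_ae ?_)
    filter_upwards [ae_restrict_mem measurableSet_Ico, ae_restrict_of_ae hff'] with s hs hsf
    refine (enorm_integral_le_lintegral_enorm _).trans (lintegral_mono_ae ?_)
    filter_upwards [hsf] with y hy
    rw [enorm_mul, hk _ (by linarith [hs.2]), hy]
  have hyoung : ∀ᵐ s ∂(volume.restrict (Set.Ico (0 : ℝ) t)), ∫⁻ x, H s x ^ r ≤ W s ^ r := by
    filter_upwards [ae_restrict_mem measurableSet_Ico] with s hs
    have hts : 0 < t - s := by linarith [hs.2]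
    refine (lintegral_convolution_rpow_le volume (hks (t - s)) (hgs s) hm hc hr hrel).trans ?_
    simp only [hW, hF, hk _ hts]
    gcongr
    exact hK _ hts
  have hFf : ∀ᵐ s ∂(volume.restrict (Set.Ico (0 : ℝ) t)),
      F s ^ γ = eLpNorm (f s) (ENNReal.ofReal c) volume ^ γ := by
    filter_upwards [ae_restrict_of_ae hff'] with s hs
    have : (fun y => f s y) =ᵐ[volume] fun y => f' (s, y) := hs
    rw [eLpNorm_congr_ae this, eLpNorm_ofReal_eq_lintegral _ hc0]
  have htime : (∫⁻ s in Set.Ico (0 : ℝ) t, ENNReal.ofReal (C * (t - s) ^ (-e)) ^ γ') ^ (1 / γ') =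
      ENNReal.ofReal (C * (t ^ (1 - e * γ') / (1 - e * γ')) ^ (1 / γ')) := by
    have hγ0 : 0 < γ' := hγ.pos
    have h1 : ∀ s ∈ Set.Ico (0 : ℝ) t, ENNReal.ofReal (C * (t - s) ^ (-e)) ^ γ' =
        ENNReal.ofReal (C ^ γ') * ENNReal.ofReal ((t - s) ^ (-(e * γ'))) := by
      intro s hs
      have hts : 0 < t - s := by linarith [hs.2]
      rw [ENNReal.ofReal_rpow_of_nonneg (by positivity) hγ0.le,
        Real.mul_rpow hC.le (by positivity), ENNReal.ofReal_mul (by positivity),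
        ← Real.rpow_mul hts.le, neg_mul]
    have h2 : 0 ≤ t ^ (1 - e * γ') / (1 - e * γ') :=
      div_nonneg (by positivity) (by linarith)
    rw [setLIntegral_congr_fun measurableSet_Ico h1, lintegral_const_mul' _ _ ENNReal.ofReal_ne_top,
      lintegral_sub_rpow_neg he ht, ← ENNReal.ofReal_mul (by positivity),
      ENNReal.ofReal_rpow_of_nonneg (by positivity) (by positivity),
      Real.mul_rpow (by positivity) h2, ← Real.rpow_mul hC.le, mul_one_div_cancel hγ0.ne',
      Real.rpow_one]
  calc _ ≤ (∫⁻ x, (∫⁻ s in Set.Ico (0 : ℝ) t, H s x) ^ r) ^ (1 / r) := by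
        rw [eLpNorm_ofReal_eq_lintegral _ hr0]
        gcongr with x
        exact hpt x
    _ ≤ ((∫⁻ s in Set.Ico (0 : ℝ) t, W s) ^ r) ^ (1 / r) := by
        gcongr
        exact lintegral_rpow_lintegral_le hHm hWm hr hyoung
    _ = ∫⁻ s in Set.Ico (0 : ℝ) t, W s := by
        rw [← ENNReal.rpow_mul, mul_one_div_cancel hr0.ne', ENNReal.rpow_one]
    _ ≤ _ := ENNReal.lintegral_mul_le_Lp_mul_Lq _ hγ hwm.aemeasurable hFm.aemeasurable
    _ = _ := by rw [htime, lintegral_congr_ae hFf]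

/-- **Strichartz-type estimate for the fractional heat semigroup** (Lemma A.4): for an
admissible triplet `(q,p,r)` and parameters `b, ν` as stated,
`‖∫₀ᵗ (−Δ)^{ν/2} S_α(t−s) f(s) ds‖_{L^∞([0,T); L^r)} ≤ C T^{1 − nb/(2rα) − ν/(2α)}
‖f‖_{L^{q/(b+1)}([0,T); L^{p/(b+1)})}`. -/
theorem fractional_heat_strichartz (n : ℕ) (hn : 1 ≤ n) (α ν b T : ℝ)
    (hα : 0 < α) (hν : 0 ≤ ν) (hb : 0 < b) (hT : 0 < T) (q p r : ℝ)
    (hadm : 1 / q = ((n : ℝ) / (2 * α)) * (1 / r - 1 / p))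
    (hr1 : 1 < r) (hrp : r ≤ p)
    (hsub : (n : ℝ) > 2 * α → p < (n : ℝ) * r / ((n : ℝ) - 2 * α))
    (hpb : b + 1 < p) (hpr : p < r * (b + 1))
    (hr0 : (n : ℝ) * b / (2 * α) ≤ r) (hr0' : 1 < (n : ℝ) * b / (2 * α))
    (hq : b + 1 < q) (hexp : ν / (2 * α) + (n : ℝ) * b / (2 * r * α) < 1) :
    ∃ C : ℝ, 0 < C ∧ ∀ f : ℝ → Rn n → ℂ,
      AEStronglyMeasurable (Function.uncurry f) ((volume : Measure ℝ).prod volume) →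
      mixedNorm n T (q / (b + 1)) (p / (b + 1)) f ≠ ⊤ →
      ∀ t ∈ Set.Ico (0 : ℝ) T,
        eLpNorm
            (fun x : Rn n =>
              ∫ s in Set.Ico (0 : ℝ) t, ∫ y : Rn n, heatKernel n α ν (t - s) (x - y) * f s y)
            (ENNReal.ofReal r) volume
          ≤ ENNReal.ofReal (C * T ^ (1 - (n : ℝ) * b / (2 * r * α) - ν / (2 * α))) *
              mixedNorm n T (q / (b + 1)) (p / (b + 1)) f := by
  have hb1 : 0 < b + 1 := by linarith
  have hp : 0 < p := by linarith
  have hq0 : 0 < q := by linarith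
  have hr : 0 < r := by linarith
  have hpos1 : 1 / r < (b + 1) / p := by rw [div_lt_div_iff₀ hr hp]; linarith
  have hlt1 : (b + 1) / p < 1 := (div_lt_one hp).2 hpb
  have hri : 0 < 1 / r := by positivity
  set m : ℝ := 1 / (1 + 1 / r - (b + 1) / p) with hm
  have hminv : 1 / m = 1 + 1 / r - (b + 1) / p := by rw [hm, one_div_one_div]
  have hm1 : 1 < m := by rw [hm, one_lt_div (by linarith)]; linarith
  have hc1 : 1 < p / (b + 1) := (one_lt_div hb1).2 hpb
  have hγ1 : 1 < q / (b + 1) := (one_lt_div hb1).2 hq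
  set γ : ℝ := q / (b + 1) with hγ
  have hγinv : 1 / γ = (b + 1) / q := by rw [hγ, one_div_div]
  have hconj : γ.conjExponent.HolderConjugate γ := (Real.HolderConjugate.conjExponent hγ1).symm
  set γ' : ℝ := γ.conjExponent with hγ'
  have hγ'0 : 0 < γ' := hconj.pos
  have hγ'inv : 1 / γ' = 1 - (b + 1) / q := by
    have := hconj.inv_add_inv_eq_one
    rw [← one_div, ← one_div, hγinv] at this
    linarith
  obtain ⟨C₀, hC₀, hK⟩ := exists_lintegral_heatKernel_le hn hα hν hm1
  set e : ℝ := ν / (2 * α) + n / (2 * α) * (1 - 1 / m) with he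
  have heq : 1 / γ' - e = 1 - (n : ℝ) * b / (2 * r * α) - ν / (2 * α) := by
    have h1 : (b + 1) / q = (b + 1) * ((n : ℝ) / (2 * α) * (1 / r - 1 / p)) := by
      rw [← hadm]; ring
    rw [hγ'inv, he, hminv, h1]
    field_simp
    ring
  have hκ : 0 < 1 / γ' - e := by rw [heq]; linarith
  have heγ : e * γ' < 1 := by
    have := mul_pos hκ hγ'0
    rw [sub_mul, one_div_mul_cancel hγ'0.ne'] at this
    linarith
  have hden : 0 < 1 - e * γ' := by linarith
  refine ⟨C₀ * (1 / (1 - e * γ')) ^ (1 / γ'), by positivity, fun f hf _ t ht => ?_⟩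
  rcases ht.1.eq_or_lt with rfl | ht0
  · simp
  refine (eLpNorm_duhamel_le hn hα hν hm1 hc1 hr1 ?_ hconj heγ hC₀ hK ht0 hf).trans ?_
  · rw [hminv, one_div_div]; ring
  rw [mixedNorm]
  gcongr ENNReal.ofReal ?_ * ?_ ^ _
  · rw [← heq, div_eq_mul_one_div, Real.mul_rpow (by positivity) (by positivity),
      ← Real.rpow_mul ht0.le, mul_comm (t ^ _), ← mul_assoc]
    have : (1 - e * γ') * (1 / γ') = 1 / γ' - e := by field_simp
    rw [this]
    gcongr
    exact ht.2.le
  · exact lintegral_mono_set (Set.Ico_subset_Ico_right ht.2.le)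
end
end
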